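/- arXiv:2103.05415 — 5 statements merged into one kernel-verified Lean document; each statement's English description precedes it below -/
import Mathlib

section
/- Let a ∈ ℕ and for each b ∈ [a] let (s_b, k_b, M_b, (∼_{b,n})_{n∈ℕ}) be a model functor, with underlying sets F_{b,n} and maps F_b(π). For each n ∈ ℕ let ⪯_n be a reflexive and transitive relation on the disjoint union F_n := ⊔_{b∈[a]} F_{b,n} satisfying: (C1) if x ∈ F_{b,n}, y ∈ F_{b',n} and x ⪯_n y, then b ≤ b'; (C2) for x, y ∈ F_{b,n}: x ⪯_n y if and only if x ∼_{b,n} y; (C3) for every injection π : [m] → [n] and all x = (σ,α) ∈ F_{b,n}, y = (σ',α') ∈ F_{b',n} with im(σ) ∪ im(σ') ⊆ im(π): x ⪯_n y implies F_b(π)(x) ⪯_m F_{b'}(π)(y). Let ≈_n be the equivalence relation x ≈_n y iff x ⪯_n y and y ⪯_n x, and let C(n) be the set of ≈_n-classes that are maximal for the partial order induced by ⪯_n on F_n/≈_n; the Sym([n])-action on each F_{b,n} preserves ⪯_n and hence acts on C(n). Then the number of Sym([n])-orbits on C(n) is a quasipolynomial in n for all n ≫ 0. -/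
/-- A function `f : ℤ → ℚ` is a quasipolynomial if there are an integer `N ≥ 1` and
polynomials `p i ∈ ℚ[t]` such that `f n = p (n mod N) (n)` for all `n`. -/
def IsQuasiPolynomial (f : ℤ → ℚ) : Prop :=
  ∃ N : ℕ, 0 < N ∧ ∃ p : ZMod N → Polynomial ℚ,
    ∀ n : ℤ, f n = (p (n : ZMod N)).eval (n : ℚ)

/-- A quantity `a : ℕ → ℕ` is a quasipolynomial in `n` for all `n ≫ 0`. -/
def QuasiPolynomialCount (a : ℕ → ℕ) : Prop :=
  ∃ f : ℤ → ℚ, IsQuasiPolynomial f ∧ ∃ n₀ : ℕ, ∀ n : ℕ, n₀ ≤ n → (a n : ℚ) = f n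

/-- A pair `(σ, α)` consisting of an injection `σ : [s] → [n]` together with a word
`α : [n] ∖ im(σ) → [k]`. -/
structure MPair (s k n : ℕ) where
  σ : Fin s → Fin n
  inj : Function.Injective σ
  α : {j : Fin n // j ∉ Set.range σ} → Fin k

/-- The count vector of a pair: the `l`-th entry records how often the letter `l` occurs
in the word `α`. -/
noncomputable def MPair.countVec {s k n : ℕ} (p : MPair s k n) : Fin k → ℕ :=
  fun l => Nat.card {j : {j : Fin n // j ∉ Set.range p.σ} // p.α j = l}

/-- The set `F_n` of pairs whose count vector lies in `M`. -/
def FPair (s k : ℕ) (M : Set (Fin k → ℕ)) (n : ℕ) : Type :=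
  {p : MPair s k n // p.countVec ∈ M}

/-- Restriction of a pair along an injection `π : [m] → [n]` whose image contains the
image of `σ`: this underlies the map `F(π)` of the model functor. -/
noncomputable def MPair.restrict {s k m n : ℕ} (π : Fin m → Fin n)
    (hπ : Function.Injective π) (p : MPair s k n)
    (hsub : Set.range p.σ ⊆ Set.range π) : MPair s k m where
  σ := fun i => (hsub (Set.mem_range_self i)).choose
  inj := by
    intro i i' hii
    apply p.inj
    have h1 := (hsub (Set.mem_range_self i)).choose_spec
    have h2 := (hsub (Set.mem_range_self i')).choose_spec
    rw [← h1, ← h2]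
    exact congrArg π hii
  α := fun j => p.α ⟨π j.1, by
    rintro ⟨i, hi⟩
    exact j.2 ⟨i, hπ ((hsub (Set.mem_range_self i)).choose_spec.trans hi)⟩⟩

/-- The count vector can only decrease under restriction. -/
theorem MPair.countVec_restrict_le {s k m n : ℕ} (π : Fin m → Fin n)
    (hπ : Function.Injective π) (p : MPair s k n)
    (hsub : Set.range p.σ ⊆ Set.range π) (l : Fin k) :
    (p.restrict π hπ hsub).countVec l ≤ p.countVec l := by
  classical
  apply Nat.card_le_card_of_injective
    (fun j => (⟨⟨π j.1.1, by
        rintro ⟨i, hi⟩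
        exact j.1.2 ⟨i, hπ ((hsub (Set.mem_range_self i)).choose_spec.trans hi)⟩⟩,
      j.2⟩ : {j : {j : Fin n // j ∉ Set.range p.σ} // p.α j = l}))
  intro a b hab
  have hval : π a.1.1 = π b.1.1 := congrArg (fun x => x.1.1) hab
  exact Subtype.ext (Subtype.ext (hπ hval))

/-- Restriction, as a map `F(π)` on the sets `F_n` of the model functor; this uses
downward closedness of `M`. -/
noncomputable def FPair.restrict {s k m n : ℕ} {M : Set (Fin k → ℕ)}
    (hM : ∀ β ∈ M, ∀ β' : Fin k → ℕ, (∀ l, β' l ≤ β l) → β' ∈ M)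
    (π : Fin m → Fin n) (hπ : Function.Injective π) (p : FPair s k M n)
    (hsub : Set.range p.1.σ ⊆ Set.range π) : FPair s k M m :=
  ⟨p.1.restrict π hπ hsub, hM _ p.2 _ (fun l => MPair.countVec_restrict_le π hπ p.1 hsub l)⟩

/-!
Write a pair `(σ, α)` as a word over a finite alphabet whose letters are the markers `1, …, s` and
the letters of `α`. Two words differ by a permutation of positions if and only if they have the
same Parikh vector, so `⪯` induces a relation `R` between Parikh vectors. A pair of words is a word
over the product alphabet, and by (C3) the relation `⪯` survives deleting positions that carry no
marker. Hence, for fixed summands, `R` is a lower set cut out by linear conditions which fix the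
number of markers, and `R` is semilinear.

Permutations have finite order, so `c ⪯ c ∘ τ` already forces `c ∘ τ ⪯ c`. It follows that `R`
knows which words are maximal and which of them are equivalent up to a permutation. Choosing in
each maximal class the lexicographically least Parikh vector turns the orbits into the points of
total degree `n` of a set defined from `R` by boolean operations and projection, that is, of a
semilinear set.

A semilinear set is a finite union of hybrid linear sets, which are closed under intersection, so
inclusion-exclusion leaves one hybrid linear set; lexicographically least parameters and Dickson's
lemma reduce further to orthants `z + ℕᵐ`. Their counting functions are annihilated by products of
difference operators `f(n + w) - f(n)`, which characterizes quasipolynomials.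
-/

open Polynomial Filter fwdDiff_aux

section EventuallyQuasiPolynomial

theorem fwdDiff_iter_eq_aeval_shiftₗ (N d : ℕ) (f : ℕ → ℚ) :
    (fwdDiff N)^[d] f = aeval (shiftₗ ℕ ℚ 1) ((X ^ N - 1 : ℤ[X]) ^ d) f := by
  have h : fwdDiffₗ ℕ ℚ N = aeval (shiftₗ ℕ ℚ 1) (X ^ N - 1 : ℤ[X]) := by
    ext f n
    simp [shiftₗ_pow_apply, fwdDiff]
  rw [map_pow, ← h, coe_fwdDiffₗ_pow]

theorem X_pow_sub_one_pow_dvd {R : Type*} [CommRing R] {N N' d d' : ℕ} (hN : N ∣ N')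
    (hd : d ≤ d') : (X ^ N - 1 : R[X]) ^ d ∣ (X ^ N' - 1) ^ d' := by
  obtain ⟨c, rfl⟩ := hN
  rw [pow_mul]
  exact (pow_dvd_pow_of_dvd (sub_one_dvd_pow_sub_one _ _) d).trans (pow_dvd_pow _ hd)

/-- The sequences that vanish from some point on. -/
def eventuallyZero : Submodule ℤ (ℕ → ℚ) where
  carrier := {f | ∀ᶠ n in atTop, f n = 0}
  zero_mem' := .of_forall fun _ => rfl
  add_mem' hf hg := by
    filter_upwards [hf, hg] with n hfn hgn
    simp [hfn, hgn]
  smul_mem' c f hf := by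
    filter_upwards [hf] with n hfn
    simp [hfn]

theorem aeval_shiftₗ_mem_eventuallyZero_of_dvd {p q : ℤ[X]} (hpq : p ∣ q) {f : ℕ → ℚ}
    (hf : aeval (shiftₗ ℕ ℚ 1) p f ∈ eventuallyZero) :
    aeval (shiftₗ ℕ ℚ 1) q f ∈ eventuallyZero := by
  have shift_invariant : eventuallyZero ≤ eventuallyZero.comap (shiftₗ ℕ ℚ 1) := fun g hg => by
    filter_upwards [(tendsto_add_atTop_nat 1).eventually hg] with n hn
    rwa [shiftₗ_apply]
  obtain ⟨r, rfl⟩ := hpq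
  rw [mul_comm, map_mul]
  exact aeval_apply_smul_mem_of_le_comap hf r _ shift_invariant

/-- The sequences that agree from some point on with a quasipolynomial. The definition through
difference operators makes closure under sums evident; the polynomials come back with Newton's
interpolation formula in `quasiPolynomialCount_of_mem`. -/
def eventuallyQuasiPolynomial : Submodule ℤ (ℕ → ℚ) where
  carrier := {f | ∃ N > 0, ∃ d, (fwdDiff N)^[d] f ∈ eventuallyZero}
  zero_mem' := ⟨1, one_pos, 0, eventuallyZero.zero_mem⟩
  add_mem' := by
    rintro f g ⟨N, hN, d, hf⟩ ⟨N', hN', d', hg⟩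
    refine ⟨N * N', Nat.mul_pos hN hN', max d d', ?_⟩
    rw [fwdDiff_iter_eq_aeval_shiftₗ] at hf hg ⊢
    rw [map_add]
    exact eventuallyZero.add_mem
      (aeval_shiftₗ_mem_eventuallyZero_of_dvd
        (X_pow_sub_one_pow_dvd (Nat.dvd_mul_right _ _) (le_max_left _ _)) hf)
      (aeval_shiftₗ_mem_eventuallyZero_of_dvd
        (X_pow_sub_one_pow_dvd (Nat.dvd_mul_left _ _) (le_max_right _ _)) hg)
  smul_mem' := by
    rintro c f ⟨N, hN, d, hf⟩
    refine ⟨N, hN, d, ?_⟩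
    rw [fwdDiff_iter_const_smul]
    exact eventuallyZero.smul_mem c hf

theorem eventuallyZero_le_eventuallyQuasiPolynomial :
    eventuallyZero ≤ eventuallyQuasiPolynomial := fun _ hf => ⟨1, one_pos, 0, hf⟩

theorem comp_add_mem_eventuallyQuasiPolynomial_iff {f : ℕ → ℚ} (w : ℕ) :
    (fun n => f (n + w)) ∈ eventuallyQuasiPolynomial ↔ f ∈ eventuallyQuasiPolynomial := by
  change (∃ N > 0, _) ↔ ∃ N > 0, _
  refine exists_congr fun N => and_congr_right fun _ => exists_congr fun d => ?_
  change (∀ᶠ n in atTop, _) ↔ ∀ᶠ n in atTop, _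
  simp only [fwdDiff_iter_comp_add]
  conv_rhs => rw [← map_add_atTop_eq_nat w, eventually_map]

theorem mem_eventuallyQuasiPolynomial_of_fwdDiff {f : ℕ → ℚ} {w : ℕ} (hw : 0 < w)
    (h : fwdDiff w f ∈ eventuallyQuasiPolynomial) : f ∈ eventuallyQuasiPolynomial := by
  obtain ⟨N, hN, d, hd⟩ := h
  refine ⟨w * N, Nat.mul_pos hw hN, d + 1, ?_⟩
  rw [fwdDiff_iter_eq_aeval_shiftₗ] at hd ⊢
  rw [← Function.iterate_one (fwdDiff w), fwdDiff_iter_eq_aeval_shiftₗ, ← Module.End.mul_apply,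
    ← map_mul] at hd
  rw [pow_succ]
  rw [pow_one] at hd
  refine aeval_shiftₗ_mem_eventuallyZero_of_dvd (mul_dvd_mul
    (X_pow_sub_one_pow_dvd (Nat.dvd_mul_left _ _) le_rfl) ?_) hd
  simpa using X_pow_sub_one_pow_dvd (d := 1) (Nat.dvd_mul_right w N) le_rfl

end EventuallyQuasiPolynomial

theorem exists_polynomial_eq_of_fwdDiff_iter_eq_zero {A K : Type*} [AddCommMonoid A] [Field K]
    [CharZero K] {f : A → K} {h y : A} {d : ℕ} (hf : ∀ k ≥ d, (fwdDiff h)^[k] f y = 0) :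
    ∃ p : K[X], ∀ q : ℕ, f (y + q • h) = p.eval (q : K) := by
  refine ⟨∑ k ∈ Finset.range d, C ((fwdDiff h)^[k] f y / k.factorial) * descPochhammer K k,
    fun q => ?_⟩
  have hq : ∑ k ∈ Finset.range (q + 1), q.choose k • (fwdDiff h)^[k] f y =
      ∑ k ∈ Finset.range d, q.choose k • (fwdDiff h)^[k] f y := by
    refine Finset.sum_congr_of_eq_on_inter ?_ ?_ fun _ _ _ => rfl
    · intro k _ hk
      rw [hf k (by simpa using hk), smul_zero]
    · intro k _ hk
      rw [Nat.choose_eq_zero_of_lt (by simpa using hk), zero_smul]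
  rw [shift_eq_sum_fwdDiff_iter h f q y, hq, eval_finsetSum]
  refine Finset.sum_congr rfl fun k _ => ?_
  have hk : (k.factorial : K) ≠ 0 := mod_cast k.factorial_ne_zero
  rw [eval_mul, eval_C, descPochhammer_eval_eq_descFactorial,
    Nat.descFactorial_eq_factorial_mul_choose, nsmul_eq_mul]
  push_cast
  field_simp

theorem quasiPolynomialCount_of_mem {a : ℕ → ℕ}
    (ha : (fun n => (a n : ℚ)) ∈ eventuallyQuasiPolynomial) : QuasiPolynomialCount a := by
  obtain ⟨N, hN, d, h⟩ := ha
  set f : ℕ → ℚ := fun n => (a n : ℚ)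
  obtain ⟨n₀, hn₀⟩ := eventually_atTop.1 h
  have hzero : ∀ k ≥ d, ∀ n ≥ n₀, (fwdDiff N)^[k] f n = 0 := by
    refine Nat.le_induction hn₀ fun k _ ih n hn => ?_
    rw [Function.iterate_succ_apply', fwdDiff, ih _ (by omega), ih _ hn, sub_zero]
  have : NeZero N := ⟨hN.ne'⟩
  choose p hp using fun r : ZMod N => exists_polynomial_eq_of_fwdDiff_iter_eq_zero (f := f)
    (h := N) (y := N * n₀ + r.val) (d := d)
    fun k hk => hzero k hk _ (Nat.le_add_right_of_le (Nat.le_mul_of_pos_left _ hN))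
  refine ⟨_, ⟨N, hN, fun r => (p r).comp (C (N : ℚ)⁻¹ * (X - C (N * n₀ + r.val : ℚ))),
    fun n => rfl⟩, N * n₀, fun n hn => ?_⟩
  obtain ⟨q, hq⟩ : ∃ q, n = N * n₀ + (n : ZMod N).val + q • N := by
    obtain ⟨t, rfl⟩ := Nat.exists_eq_add_of_le hn
    refine ⟨t / N, ?_⟩
    have := Nat.mod_add_div t N
    rw [ZMod.val_natCast, Nat.mul_add_mod, smul_eq_mul, mul_comm (t / N)]
    omega
  have hq' : (N : ℚ)⁻¹ * (n - (N * n₀ + (n : ZMod N).val)) = q := by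
    have hcast : (n : ℚ) = N * n₀ + (n : ZMod N).val + q * N := mod_cast hq
    rw [hcast, add_sub_cancel_left, mul_comm, mul_inv_cancel_right₀ (mod_cast hN.ne')]
  calc (a n : ℚ) = f (N * n₀ + (n : ZMod N).val + q • N) := by rw [← hq]
    _ = (p n).eval (q : ℚ) := hp _ _
    _ = _ := by simp only [Int.cast_natCast, eval_comp, eval_mul, eval_C, eval_sub, eval_X, hq']

section LevelCount

variable {α β : Type*} {wt : α → ℕ}

/-- The sequence counting the elements of weight `n` of the set `S`. -/
noncomputable def levelCount (wt : α → ℕ) (S : Set α) : ℕ → ℚ :=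
  fun n => (S ∩ wt ⁻¹' {n}).ncard

theorem levelCount_union_add_inter (hwt : ∀ n, (wt ⁻¹' {n}).Finite) (A B : Set α) :
    levelCount wt (A ∪ B) + levelCount wt (A ∩ B) = levelCount wt A + levelCount wt B := by
  ext n
  have := Set.ncard_union_add_ncard_inter (A ∩ wt ⁻¹' {n}) (B ∩ wt ⁻¹' {n})
    ((hwt n).inter_of_right A) ((hwt n).inter_of_right B)
  rw [← Set.union_inter_distrib_right, ← Set.inter_inter_distrib_right] at this
  simpa only [levelCount, Pi.add_apply] using mod_cast this

theorem levelCount_union_mem (hwt : ∀ n, (wt ⁻¹' {n}).Finite) {A B : Set α}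
    (hA : levelCount wt A ∈ eventuallyQuasiPolynomial)
    (hB : levelCount wt B ∈ eventuallyQuasiPolynomial)
    (hAB : levelCount wt (A ∩ B) ∈ eventuallyQuasiPolynomial) :
    levelCount wt (A ∪ B) ∈ eventuallyQuasiPolynomial := by
  rw [eq_sub_of_add_eq (levelCount_union_add_inter hwt A B)]
  exact sub_mem (add_mem hA hB) hAB

theorem levelCount_empty : levelCount wt ∅ = 0 := by
  ext n
  simp [levelCount]

theorem levelCount_union (hwt : ∀ n, (wt ⁻¹' {n}).Finite) {A B : Set α} (h : Disjoint A B) :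
    levelCount wt (A ∪ B) = levelCount wt A + levelCount wt B := by
  simpa [h.inter_eq, levelCount_empty] using levelCount_union_add_inter hwt A B

theorem levelCount_image {f : β → α} {S : Set β} (hf : Set.InjOn f S) :
    levelCount wt (f '' S) = levelCount (wt ∘ f) S := by
  ext n
  simp only [levelCount]
  rw [← Set.image_inter_preimage, ← Set.preimage_comp,
    (hf.mono Set.inter_subset_left).ncard_image]

theorem levelCount_add_const (w : ℕ) (S : Set α) (n : ℕ) :
    levelCount (fun x => wt x + w) S (n + w) = levelCount wt S n := by
  simp only [levelCount, Set.preimage, Set.mem_singleton_iff, Nat.add_right_cancel_iff]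

theorem levelCount_add_const_mem_iff (w : ℕ) (S : Set α) :
    levelCount (fun x => wt x + w) S ∈ eventuallyQuasiPolynomial ↔
      levelCount wt S ∈ eventuallyQuasiPolynomial := by
  rw [← comp_add_mem_eventuallyQuasiPolynomial_iff w]
  simp only [levelCount_add_const]

theorem levelCount_mem_of_finite {S : Set α} (hS : S.Finite) :
    levelCount wt S ∈ eventuallyQuasiPolynomial := by
  refine eventuallyZero_le_eventuallyQuasiPolynomial ?_
  obtain ⟨b, hb⟩ := (hS.image wt).bddAbove
  filter_upwards [eventually_gt_atTop b] with n hn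
  have : S ∩ wt ⁻¹' {n} = ∅ := by
    ext x
    simp only [Set.mem_inter_iff, Set.mem_preimage, Set.mem_singleton_iff,
      Set.mem_empty_iff_false, iff_false, not_and]
    rintro hx rfl
    exact hn.not_ge (hb (Set.mem_image_of_mem wt hx))
  simp [levelCount, this]

theorem levelCount_sUnion_mem (hwt : ∀ n, (wt ⁻¹' {n}).Finite) {C : Set (Set α)}
    (hC : InfClosed C) (hcount : ∀ A ∈ C, levelCount wt A ∈ eventuallyQuasiPolynomial)
    {F : Set (Set α)} (hF : F.Finite) (hFC : F ⊆ C) :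
    levelCount wt (⋃₀ F) ∈ eventuallyQuasiPolynomial := by
  suffices h : ∀ A, (∀ B ∈ C, A ∩ B ∈ C) →
      levelCount wt (A ∩ ⋃₀ F) ∈ eventuallyQuasiPolynomial by
    simpa using h Set.univ (by simp)
  induction F, hF using Set.Finite.induction_on with
  | empty => simp [levelCount_empty]
  | @insert B F _ _ ih =>
    obtain ⟨hB, hFC⟩ := Set.insert_subset_iff.1 hFC
    intro A hA
    rw [Set.sUnion_insert, Set.inter_union_distrib_left]
    refine levelCount_union_mem hwt (hcount _ (hA B hB)) (ih hFC A hA) ?_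
    rw [← Set.inter_inter_distrib_left, ← Set.inter_assoc]
    exact ih hFC _ fun B' hB' => (Set.inter_assoc A B B').symm ▸ hA _ (hC hB hB')

theorem apply_le_of_addMonoidHom {ι : Type*} [DecidableEq ι] {w : (ι → ℕ) →+ ℕ} {i : ι}
    (hw : 0 < w (Pi.single i 1)) (c : ι → ℕ) : c i ≤ w c := by
  obtain ⟨d, hd⟩ := exists_add_of_le (show c i • Pi.single i 1 ≤ c by
    intro j
    obtain rfl | hj := eq_or_ne j i
    · simp
    · simp [hj])
  calc c i ≤ c i * w (Pi.single i 1) := Nat.le_mul_of_pos_right _ hw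
    _ ≤ c i * w (Pi.single i 1) + w d := Nat.le_add_right _ _
    _ = w c := by conv_rhs => rw [hd, map_add, map_nsmul, smul_eq_mul]

theorem finite_level_of_addMonoidHom {ι : Type*} [Finite ι] [DecidableEq ι]
    {w : (ι → ℕ) →+ ℕ} (hw : ∀ i, 0 < w (Pi.single i 1)) (n : ℕ) : (w ⁻¹' {n}).Finite := by
  cases nonempty_fintype ι
  refine (Set.finite_Iic fun _ : ι => n).subset ?_
  rintro c rfl i
  exact apply_le_of_addMonoidHom (hw i) c

end LevelCount

section Orthant

variable {ι : Type*} [Finite ι] [DecidableEq ι] {w : (ι → ℕ) →+ ℕ}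

theorem levelCount_face_mem (hw : ∀ i, 0 < w (Pi.single i 1)) (s : Finset ι) :
    levelCount w {c | ∀ i ∉ s, c i = 0} ∈ eventuallyQuasiPolynomial := by
  induction s using Finset.induction_on with
  | empty =>
    refine levelCount_mem_of_finite ((Set.finite_singleton 0).subset ?_)
    exact fun c hc => funext fun i => hc i (Finset.notMem_empty i)
  | insert i s hi ih =>
    set F := {c : ι → ℕ | ∀ j ∉ s, c j = 0}
    set F' := {c : ι → ℕ | ∀ j ∉ insert i s, c j = 0}
    have split : F' = F ∪ (· + Pi.single i 1) '' F' := by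
      ext c
      constructor
      · intro hc
        by_cases hci : c i = 0
        · exact .inl fun j hj => if h : j = i then h ▸ hci else hc j (by simp [h, hj])
        · obtain ⟨d, rfl⟩ := exists_add_of_le (show Pi.single i 1 ≤ c from
            update_le_iff.2 ⟨Nat.one_le_iff_ne_zero.2 hci, fun j _ => Nat.zero_le _⟩)
          exact .inr ⟨d, fun j hj => (add_eq_zero.1 (hc j hj)).2, add_comm _ _⟩
      · rintro (hc | ⟨c, hc, rfl⟩) j hj <;> rw [Finset.mem_insert, not_or] at hj
        · exact hc j hj.2
        · simpa [hj.1] using hc j (by simp [hj])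
    have disjoint : Disjoint F ((· + Pi.single i 1) '' F') := by
      rw [Set.disjoint_left]
      rintro _ hc ⟨c, -, rfl⟩
      simpa using hc i hi
    have recursion (n : ℕ) : levelCount w F' (n + w (Pi.single i 1)) =
        levelCount w F (n + w (Pi.single i 1)) + levelCount w F' n := by
      conv_lhs => rw [split, levelCount_union (finite_level_of_addMonoidHom hw) disjoint,
        levelCount_image (add_left_injective _).injOn]
      simp only [Function.comp_def, map_add, Pi.add_apply, levelCount_add_const]
    refine mem_eventuallyQuasiPolynomial_of_fwdDiff (hw i) ?_
    rw [← comp_add_mem_eventuallyQuasiPolynomial_iff (w (Pi.single i 1))] at ih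
    convert ih using 1
    ext n
    rw [fwdDiff, recursion, add_sub_cancel_right]

theorem levelCount_univ_mem (hw : ∀ i, 0 < w (Pi.single i 1)) :
    levelCount w Set.univ ∈ eventuallyQuasiPolynomial := by
  cases nonempty_fintype ι
  simpa using levelCount_face_mem hw Finset.univ

theorem levelCount_Ici_mem (hw : ∀ i, 0 < w (Pi.single i 1)) (z : ι → ℕ) :
    levelCount w (Set.Ici z) ∈ eventuallyQuasiPolynomial := by
  have : Set.Ici z = (· + z) '' Set.univ := by
    ext c
    simp [Set.mem_Ici, le_iff_exists_add', eq_comm]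
  rw [this, levelCount_image (add_left_injective z).injOn]
  simpa [Function.comp_def] using
    (levelCount_add_const_mem_iff (w z) Set.univ).2 (levelCount_univ_mem hw)

theorem exists_finite_eq_sUnion_Ici {α : Type*} [PartialOrder α] [WellQuasiOrderedLE α]
    {U : Set α} (hU : IsUpperSet U) : ∃ Z : Set α, Z.Finite ∧ U = ⋃₀ (Set.Ici '' Z) := by
  refine ⟨{z | Minimal (· ∈ U) z},
    WellQuasiOrderedLE.finite_of_isAntichain (setOfPred_minimal_antichain _), ?_⟩
  ext c
  simp only [Set.sUnion_image, Set.mem_iUnion, exists_prop]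
  constructor
  · intro hc
    obtain ⟨z, hzc, hz⟩ := exists_minimal_le_of_wellFoundedLT (· ∈ U) c hc
    exact ⟨z, hz, hzc⟩
  · rintro ⟨z, hz, hzc⟩
    exact hU hzc hz.prop

theorem levelCount_mem_of_isUpperSet (hw : ∀ i, 0 < w (Pi.single i 1)) {U : Set (ι → ℕ)}
    (hU : IsUpperSet U) : levelCount w U ∈ eventuallyQuasiPolynomial := by
  obtain ⟨Z, hZ, rfl⟩ := exists_finite_eq_sUnion_Ici hU
  refine levelCount_sUnion_mem (finite_level_of_addMonoidHom hw) (C := Set.range Set.Ici) ?_ ?_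
    (hZ.image _) (Set.image_subset_range _ _)
  · rintro _ ⟨a, rfl⟩ _ ⟨b, rfl⟩
    exact ⟨a ⊔ b, Set.Ici_inter_Ici.symm⟩
  · rintro _ ⟨z, rfl⟩
    exact levelCount_Ici_mem hw z

theorem levelCount_mem_of_isLowerSet (hw : ∀ i, 0 < w (Pi.single i 1)) {D : Set (ι → ℕ)}
    (hD : IsLowerSet D) : levelCount w D ∈ eventuallyQuasiPolynomial := by
  have h := levelCount_union (finite_level_of_addMonoidHom hw)
    (disjoint_compl_right : Disjoint D Dᶜ)
  rw [Set.union_compl_self] at h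
  rw [eq_sub_of_add_eq h.symm]
  exact sub_mem (levelCount_univ_mem hw) (levelCount_mem_of_isUpperSet hw hD.compl)

end Orthant

section HybridLinear

open scoped Pointwise

variable {M : Type*} [AddCancelCommMonoid M]

/-- A hybrid linear set in the sense of Chistikov and Haase: finitely many translates of one and
the same finitely generated submonoid. Unlike linear sets, these are closed under intersection. -/
def IsHybridLinearSet (S : Set M) : Prop :=
  ∃ U : Set M, U.Finite ∧ ∃ P : AddSubmonoid M, P.FG ∧ S = U + P

theorem exists_mrange_eq_of_fg {M : Type*} [AddCommMonoid M] {P : AddSubmonoid M} (hP : P.FG) :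
    ∃ (m : ℕ) (φ : (Fin m → ℕ) →+ M), AddMonoidHom.mrange φ = P ∧ ∀ i, φ (Pi.single i 1) ≠ 0 := by
  classical
  obtain ⟨t, rfl⟩ := hP
  let e := (t.erase 0).equivFin
  let φ : (Fin (t.erase 0).card → ℕ) →+ M :=
    { toFun := fun c => ∑ i, c i • (e.symm i : M)
      map_zero' := by simp
      map_add' := fun c d => by simp only [Pi.add_apply, add_smul, Finset.sum_add_distrib] }
  have range_gens : Set.range (fun i => (e.symm i : M)) = (t : Set M) \ {0} := by
    rw [Set.range_comp' Subtype.val, e.symm.surjective.range_eq, Set.image_univ,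
      Subtype.range_coe]
    simp
  refine ⟨_, φ, ?_, fun i => ?_⟩
  · ext x
    rw [← AddSubmonoid.closure_sdiff_singleton_zero, ← range_gens,
      AddSubmonoid.mem_closure_range_iff_of_fintype]
    simp [φ, eq_comm]
  · simpa [φ, Pi.single_apply] using (Finset.mem_erase.1 (e.symm i).2).1

theorem isHybridLinearSet_of_isLinearSet {S : Set M} (hS : IsLinearSet S) :
    IsHybridLinearSet S := by
  obtain ⟨a, P, hP, rfl⟩ := isLinearSet_iff_exists_fg_eq_vadd.1 hS
  exact ⟨{a}, Set.finite_singleton a, P, hP, (Set.singleton_vadd ..).symm⟩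

/-- Modulo the fibres of the two parametrizations, an intersection point is a solution of a linear
equation, and every solution is a minimal one plus a solution of the homogeneous equation. -/
theorem IsHybridLinearSet.inter {S T : Set M} (hS : IsHybridLinearSet S)
    (hT : IsHybridLinearSet T) : IsHybridLinearSet (S ∩ T) := by
  obtain ⟨U, hU, P, hP, rfl⟩ := hS
  obtain ⟨V, hV, Q, hQ, rfl⟩ := hT
  obtain ⟨m, φ, rfl, -⟩ := exists_mrange_eq_of_fg hP
  obtain ⟨m', ψ, rfl, -⟩ := exists_mrange_eq_of_fg hQ
  let A := φ.comp (AddMonoidHom.fst (Fin m → ℕ) (Fin m' → ℕ))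
  let B := ψ.comp (AddMonoidHom.snd (Fin m → ℕ) (Fin m' → ℕ))
  let minimalSolutions (u v : M) := {z | Minimal (fun z => u + A z = v + B z) z}
  have finite_minimalSolutions (u v : M) : (minimalSolutions u v).Finite :=
    WellQuasiOrderedLE.finite_of_isAntichain (setOfPred_minimal_antichain _)
  refine ⟨⋃ u ∈ U, ⋃ v ∈ V, (u + A ·) '' minimalSolutions u v,
    hU.biUnion fun u _ => hV.biUnion fun v _ => (finite_minimalSolutions u v).image _,
    (A.eqLocusM B).map A, (AddSubmonoid.fg_eqLocusM A B).map A, ?_⟩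
  ext x
  simp only [Set.mem_inter_iff, Set.mem_add, Set.mem_iUnion, exists_prop]
  constructor
  · rintro ⟨⟨u, hu, _, ⟨c, rfl⟩, rfl⟩, v, hv, _, ⟨d, rfl⟩, hcd⟩
    obtain ⟨z, hzcd, hz⟩ :=
      exists_minimal_le_of_wellFoundedLT (fun z => u + A z = v + B z) (c, d) hcd.symm
    obtain ⟨e, he⟩ := exists_add_of_le hzcd
    have hAB : u + A (z + e) = v + B (z + e) := he ▸ hcd.symm
    refine ⟨_, ⟨u, hu, v, hv, z, hz, rfl⟩, A e, ⟨e, ?_, rfl⟩, ?_⟩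
    · rw [map_add, map_add, ← add_assoc, ← add_assoc, hz.prop] at hAB
      exact add_left_cancel hAB
    · rw [add_assoc, ← map_add, ← he]
      rfl
  · rintro ⟨_, ⟨u, hu, v, hv, z, hz, rfl⟩, _, ⟨e, he, rfl⟩, rfl⟩
    have he : A e = B e := he
    have huv : u + A z = v + B z := Minimal.prop (P := fun z => u + A z = v + B z) hz
    refine ⟨⟨u, hu, A (z + e), ⟨_, rfl⟩, ?_⟩, v, hv, B (z + e), ⟨_, rfl⟩, ?_⟩
    · rw [map_add, add_assoc]
    · rw [map_add, ← add_assoc, ← huv, he]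

/-- The lexicographically least parameters of the points outside `S` form a lower set, since a
smaller parameter could be exchanged inside a larger one. -/
theorem exists_isLowerSet_image_eq_sdiff {m : ℕ} (φ : (Fin m → ℕ) →+ M) (u : M) {S : Set M}
    (hS : ∀ x ∈ S, ∀ c, x + φ c ∈ S) :
    ∃ D : Set (Fin m → ℕ), IsLowerSet D ∧ Set.InjOn (fun c => φ c + u) D ∧
      (fun c => φ c + u) '' D = Set.range (fun c => φ c + u) \ S := by
  refine ⟨{c | φ c + u ∉ S ∧ ∀ c', φ c' = φ c → toLex c ≤ toLex c'}, ?_, ?_, ?_⟩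
  · rintro _ c hc ⟨hcS, hmin⟩
    obtain ⟨e, rfl⟩ := exists_add_of_le hc
    refine ⟨fun h => hcS ?_, fun c' hc' => ?_⟩
    · rw [map_add, add_right_comm]
      exact hS _ h e
    · exact le_of_add_le_add_right (hmin (c' + e) (by rw [map_add, map_add, hc']))
  · intro c hc c' hc' h
    have hφ : φ c = φ c' := add_right_cancel h
    exact toLex.injective (le_antisymm (hc.2 _ hφ.symm) (hc'.2 _ hφ))
  · ext x
    constructor
    · rintro ⟨c, hc, rfl⟩
      exact ⟨⟨c, rfl⟩, hc.1⟩
    · rintro ⟨⟨c, rfl⟩, hx⟩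
      obtain ⟨d, hd, hmin⟩ :=
        WellFounded.has_min (wellFounded_lt (α := Lex (Fin m → ℕ))) {d | φ (ofLex d) = φ c}
          ⟨toLex c, rfl⟩
      have hd : φ (ofLex d) = φ c := hd
      exact ⟨ofLex d, ⟨by rwa [hd], fun c' hc' => not_lt.1 (hmin (toLex c') (hc'.trans hd))⟩,
        by simp only [hd]⟩

variable {wt : M →+ ℕ}

theorem levelCount_mem_of_isHybridLinearSet (hwt : ∀ n, (wt ⁻¹' {n}).Finite)
    (hwt₀ : ∀ x, wt x = 0 → x = 0) {S : Set M} (hS : IsHybridLinearSet S) :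
    levelCount wt S ∈ eventuallyQuasiPolynomial := by
  obtain ⟨U, hU, P, hP, rfl⟩ := hS
  obtain ⟨m, φ, rfl, hφ⟩ := exists_mrange_eq_of_fg hP
  have hpos (i : Fin m) : 0 < wt.comp φ (Pi.single i 1) :=
    Nat.pos_of_ne_zero fun h => hφ i (hwt₀ _ h)
  induction U, hU using Set.Finite.induction_on with
  | empty =>
    rw [Set.empty_add]
    exact levelCount_mem_of_finite Set.finite_empty
  | @insert u U _ _ ih =>
    obtain ⟨D, hD, inj, image_eq⟩ := exists_isLowerSet_image_eq_sdiff φ u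
      (S := U + (AddMonoidHom.mrange φ : Set M)) (by
        rintro _ ⟨v, hv, p, hp, rfl⟩ c
        rw [add_assoc]
        exact Set.add_mem_add hv (add_mem hp ⟨c, rfl⟩))
    have split : insert u U + (AddMonoidHom.mrange φ : Set M) =
        (U + (AddMonoidHom.mrange φ : Set M)) ∪ (fun c => φ c + u) '' D := by
      rw [image_eq, Set.union_sdiff_self, Set.insert_eq, Set.union_add, Set.union_comm,
        Set.singleton_add, AddMonoidHom.coe_mrange, ← Set.range_comp']
      simp only [add_comm u]
    rw [split, levelCount_union hwt (image_eq ▸ Set.disjoint_sdiff_right), levelCount_image inj]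
    refine add_mem ih ?_
    simpa [Function.comp_def] using (levelCount_add_const_mem_iff (wt := wt.comp φ) (wt u) D).2
      (levelCount_mem_of_isLowerSet hpos hD)

theorem levelCount_mem_of_isSemilinearSet (hwt : ∀ n, (wt ⁻¹' {n}).Finite)
    (hwt₀ : ∀ x, wt x = 0 → x = 0) {S : Set M} (hS : IsSemilinearSet S) :
    levelCount wt S ∈ eventuallyQuasiPolynomial := by
  obtain ⟨F, hF, hlin, rfl⟩ := hS
  exact levelCount_sUnion_mem hwt (C := {S | IsHybridLinearSet S}) (fun _ h _ h' => h.inter h')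
    (fun _ h => levelCount_mem_of_isHybridLinearSet hwt hwt₀ h) hF
    fun S hS => isHybridLinearSet_of_isLinearSet (hlin S hS)

end HybridLinear

section Semilinear

theorem isSemilinearSet_of_isUpperSet {ι : Type*} [Finite ι] {U : Set (ι → ℕ)}
    (hU : IsUpperSet U) : IsSemilinearSet U := by
  obtain ⟨Z, hZ, rfl⟩ := exists_finite_eq_sUnion_Ici hU
  refine IsSemilinearSet.sUnion (hZ.image _) ?_
  rintro _ ⟨z, -, rfl⟩
  convert IsSemilinearSet.univ.vadd z using 1
  ext x
  simp [Set.mem_vadd_set, le_iff_exists_add, eq_comm]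

theorem isSemilinearSet_of_isLowerSet {ι : Type*} [Finite ι] {D : Set (ι → ℕ)}
    (hD : IsLowerSet D) : IsSemilinearSet D :=
  compl_compl D ▸ (isSemilinearSet_of_isUpperSet hD.compl).compl

theorem isSemilinearSet_setOfPred_fst_lt_snd : IsSemilinearSet {q : ℕ × ℕ | q.1 < q.2} := by
  have h : IsSemilinearSet {q : ℕ × ℕ | q.2 ≤ q.1} := by
    convert IsSemilinearSet.univ.image
      ((AddMonoidHom.fst ℕ ℕ + AddMonoidHom.snd ℕ ℕ).prod (AddMonoidHom.snd ℕ ℕ)) using 1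
    ext ⟨x, y⟩
    simp [le_iff_exists_add', eq_comm]
  convert h.compl using 1
  ext q
  simp

/-- The order is the lexicographic one with respect to an arbitrary enumeration of `ι`. -/
theorem exists_isWellOrder_isSemilinearSet (ι : Type*) [Finite ι] :
    ∃ lt : (ι → ℕ) → (ι → ℕ) → Prop, IsWellOrder _ lt ∧
      IsSemilinearSet {p : (ι → ℕ) × (ι → ℕ) | lt p.1 p.2} := by
  obtain ⟨m, ⟨e⟩⟩ := Finite.exists_equiv_fin ι
  let code (γ : ι → ℕ) : Lex (Fin m → ℕ) := toLex (γ ∘ e.symm)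
  have code_injective : Function.Injective code :=
    toLex.injective.comp e.symm.surjective.injective_comp_right
  refine ⟨fun γ δ => code γ < code δ,
    (RelEmbedding.preimage ⟨code, code_injective⟩ (· < ·)).isWellOrder, ?_⟩
  let left (i : Fin m) : (ι → ℕ) × (ι → ℕ) →+ ℕ :=
    (Pi.evalAddMonoidHom (fun _ => ℕ) (e.symm i)).comp (AddMonoidHom.fst _ _)
  let right (i : Fin m) : (ι → ℕ) × (ι → ℕ) →+ ℕ :=
    (Pi.evalAddMonoidHom (fun _ => ℕ) (e.symm i)).comp (AddMonoidHom.snd _ _)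
  have lt_eq : {p : (ι → ℕ) × (ι → ℕ) | code p.1 < code p.2} =
      ⋃ i, (⋂ j ∈ Set.Iio i, {p | 0 + left j p = 0 + right j p}) ∩
        (left i).prod (right i) ⁻¹' {q | q.1 < q.2} := by
    ext p
    simp only [Set.mem_iUnion, Set.mem_inter_iff, Set.mem_iInter, Set.mem_ofPred_eq, zero_add,
      Set.mem_preimage]
    exact Iff.rfl
  rw [lt_eq]
  exact .iUnion fun i => .inter
    (.biInter (Set.toFinite _) fun j _ => isSemilinearSet_setOfPred_eq _ _ _ _)
    (isSemilinearSet_setOfPred_fst_lt_snd.preimage _)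

end Semilinear

section Words

variable {T T' : Type*} [DecidableEq T] [DecidableEq T']

/-- The Parikh vector of a word: the number of occurrences of each letter. -/
def parikh {n : ℕ} (c : Fin n → T) : T → ℕ :=
  ∑ j, Pi.single (c j) 1

theorem parikh_apply {n : ℕ} (c : Fin n → T) (t : T) :
    parikh c t = Fintype.card {j // c j = t} := by
  simp [parikh, Pi.single_apply, Fintype.card_subtype, eq_comm]

theorem exists_apply_eq_of_parikh_ne_zero {n : ℕ} {c : Fin n → T} {t : T} (h : parikh c t ≠ 0) :
    ∃ j, c j = t := by
  rw [parikh_apply] at h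
  obtain ⟨j, hj⟩ := Fintype.card_pos_iff.1 (Nat.pos_of_ne_zero h)
  exact ⟨j, hj⟩

theorem linearCombination_parikh [Fintype T] {N : Type*} [AddCommMonoid N] (f : T → N) {n : ℕ}
    (c : Fin n → T) : Fintype.linearCombination ℕ f (parikh c) = ∑ j, f (c j) := by
  simp [parikh, map_sum]

theorem sum_parikh [Fintype T] {n : ℕ} (c : Fin n → T) : ∑ t, parikh c t = n := by
  simpa [Fintype.linearCombination_apply] using linearCombination_parikh (1 : T → ℕ) c

theorem linearCombination_single_parikh [Fintype T] (g : T → T') {n : ℕ} (c : Fin n → T) :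
    Fintype.linearCombination ℕ (fun t => Pi.single (g t) 1 : T → T' → ℕ) (parikh c) =
      parikh (g ∘ c) :=
  linearCombination_parikh _ c

theorem parikh_comp_perm {n : ℕ} (c : Fin n → T) (τ : Equiv.Perm (Fin n)) :
    parikh (c ∘ τ) = parikh c :=
  Equiv.sum_comp τ fun j => (Pi.single (c j) 1 : T → ℕ)

theorem exists_parikh_eq [Finite T] (γ : T → ℕ) : ∃ (n : ℕ) (c : Fin n → T), parikh c = γ := by
  cases nonempty_fintype T
  let e := Fintype.equivFin (Σ t, Fin (γ t))
  refine ⟨_, fun j => (e.symm j).1, ?_⟩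
  calc ∑ j, Pi.single (e.symm j).1 1 = ∑ p : Σ t, Fin (γ t), Pi.single p.1 1 :=
        Equiv.sum_comp e.symm fun p => (Pi.single p.1 1 : T → ℕ)
    _ = ∑ t, Pi.single t (γ t) := by simp [Fintype.sum_sigma, ← Pi.single_smul]
    _ = γ := Finset.univ_sum_single γ

theorem exists_embedding_comp_eq_of_parikh_le {m n : ℕ} {c : Fin m → T} {d : Fin n → T}
    (h : parikh c ≤ parikh d) : ∃ π : Fin m ↪ Fin n, d ∘ π = c := by
  have fibre (t : T) : Nonempty ({j // c j = t} ↪ {j // d j = t}) :=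
    Function.Embedding.nonempty_of_card_le (by simpa only [parikh_apply] using h t)
  let ε (t : T) := (fibre t).some
  refine ⟨(Equiv.sigmaFiberEquiv c).symm.toEmbedding.trans
    ((Function.Embedding.sigmaMap (.refl T) ε).trans (Equiv.sigmaFiberEquiv d).toEmbedding), ?_⟩
  ext j
  exact (ε (c j) ⟨j, rfl⟩).2

theorem length_eq_of_parikh_eq {m n : ℕ} {c : Fin m → T} {d : Fin n → T}
    (h : parikh c = parikh d) : m = n := by
  obtain ⟨π, -⟩ := exists_embedding_comp_eq_of_parikh_le h.le
  obtain ⟨ρ, -⟩ := exists_embedding_comp_eq_of_parikh_le h.ge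
  exact le_antisymm (by simpa using Fintype.card_le_of_embedding π)
    (by simpa using Fintype.card_le_of_embedding ρ)

theorem exists_perm_comp_eq_of_parikh_eq {n : ℕ} {c d : Fin n → T} (h : parikh c = parikh d) :
    ∃ τ : Equiv.Perm (Fin n), d ∘ τ = c := by
  obtain ⟨π, hπ⟩ := exists_embedding_comp_eq_of_parikh_le h.le
  exact ⟨.ofBijective π (Finite.injective_iff_bijective.1 π.injective), hπ⟩

/-- The Parikh vectors below those of the language form a lower set, hence a semilinear one. -/
theorem isSemilinearSet_parikh_of_subword_closed [Finite T] {L : ∀ n, Set (Fin n → T)}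
    {E : Set (T → ℕ)} (hE : IsSemilinearSet E) (parikh_mem : ∀ n, ∀ c ∈ L n, parikh c ∈ E)
    (comp_mem : ∀ m n (π : Fin m ↪ Fin n), ∀ c ∈ L n, parikh (c ∘ π) ∈ E → c ∘ π ∈ L m) :
    IsSemilinearSet {γ | ∃ n, ∃ c ∈ L n, parikh c = γ} := by
  let S := {γ | ∃ n, ∃ c ∈ L n, parikh c = γ}
  suffices S = (lowerClosure S : Set (T → ℕ)) ∩ E by
    change IsSemilinearSet S
    rw [this]
    exact (isSemilinearSet_of_isLowerSet (lowerClosure S).lower).inter hE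
  refine Set.Subset.antisymm (Set.subset_inter subset_lowerClosure ?_) ?_
  · rintro _ ⟨n, c, hc, rfl⟩
    exact parikh_mem n c hc
  · rintro γ ⟨⟨_, ⟨n, d, hd, rfl⟩, hγd⟩, hγ⟩
    obtain ⟨m, c, rfl⟩ := exists_parikh_eq γ
    obtain ⟨π, rfl⟩ := exists_embedding_comp_eq_of_parikh_le hγd
    exact ⟨m, _, comp_mem m n π d hd hγ, rfl⟩

/-- The relation between Parikh vectors induced by a relation between words. -/
def ParikhRel (rel : ∀ n, (Fin n → T) → (Fin n → T') → Prop) (γ : T → ℕ) (δ : T' → ℕ) : Prop :=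
  ∃ n c d, rel n c d ∧ parikh c = γ ∧ parikh d = δ

/-- A pair of words of the same length is a word over the product alphabet. -/
theorem isSemilinearSet_parikhRel_of_subword_closed [Finite T] [Finite T']
    {rel : ∀ n, (Fin n → T) → (Fin n → T') → Prop} {E : Set (T → ℕ)} {E' : Set (T' → ℕ)}
    (hE : IsSemilinearSet E) (hE' : IsSemilinearSet E')
    (parikh_mem : ∀ n c d, rel n c d → parikh c ∈ E ∧ parikh d ∈ E')
    (rel_comp : ∀ m n (π : Fin m ↪ Fin n) c d, rel n c d →
      parikh (c ∘ π) ∈ E → parikh (d ∘ π) ∈ E' → rel m (c ∘ π) (d ∘ π)) :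
    IsSemilinearSet {p : (T → ℕ) × (T' → ℕ) | ParikhRel rel p.1 p.2} := by
  cases nonempty_fintype T
  cases nonempty_fintype T'
  let fst := Fintype.linearCombination ℕ (fun t => Pi.single t.1 1 : T × T' → T → ℕ)
  let snd := Fintype.linearCombination ℕ (fun t => Pi.single t.2 1 : T × T' → T' → ℕ)
  have fst_parikh {n : ℕ} (w : Fin n → T × T') : fst (parikh w) = parikh (Prod.fst ∘ w) :=
    linearCombination_single_parikh _ w
  have snd_parikh {n : ℕ} (w : Fin n → T × T') : snd (parikh w) = parikh (Prod.snd ∘ w) :=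
    linearCombination_single_parikh _ w
  have h := isSemilinearSet_parikh_of_subword_closed
    (L := fun n => {w | rel n (Prod.fst ∘ w) (Prod.snd ∘ w)})
    ((hE.preimage fst).inter (hE'.preimage snd))
    (fun n w hw => by simpa [fst_parikh, snd_parikh] using parikh_mem n _ _ hw)
    (fun m n π w hw hwE => by
      simp only [Set.mem_inter_iff, Set.mem_preimage, fst_parikh, snd_parikh] at hwE
      exact rel_comp m n π _ _ hw hwE.1 hwE.2)
  convert h.image (fst.prod snd) using 1
  ext ⟨γ, δ⟩
  constructor
  · rintro ⟨n, c, d, hcd, rfl, rfl⟩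
    exact ⟨_, ⟨n, fun j => (c j, d j), hcd, rfl⟩, Prod.ext (fst_parikh _) (snd_parikh _)⟩
  · rintro ⟨_, ⟨n, w, hw, rfl⟩, hγδ⟩
    obtain ⟨rfl, rfl⟩ := Prod.ext_iff.1 hγδ
    exact ⟨n, _, _, hw, (fst_parikh w).symm, (snd_parikh w).symm⟩

end Words

section MaximalClasses

variable {V : Type*}

/-- The least representatives, with respect to `lt`, of the maximal classes of a quasi-order `R`.
The quasi-order need not live on all of `V`: its domain is the set of `v` with `R v v`. -/
def leastMaximal (R lt : V → V → Prop) : Set V :=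
  {v | R v v ∧ ∀ w, R v w → R w v ∧ ¬ lt w v}

theorem isSemilinearSet_leastMaximal [AddCancelCommMonoid V] [AddMonoid.FG V]
    {R lt : V → V → Prop} (hR : IsSemilinearSet {p : V × V | R p.1 p.2})
    (hlt : IsSemilinearSet {p : V × V | lt p.1 p.2}) : IsSemilinearSet (leastMaximal R lt) := by
  let diag := (AddMonoidHom.id V).prod (AddMonoidHom.id V)
  let swap := (AddMonoidHom.snd V V).prod (AddMonoidHom.fst V V)
  convert (hR.preimage diag).sdiff
    ((hR.sdiff ((hR.preimage swap).sdiff (hlt.preimage swap))).image (AddMonoidHom.fst V V)) using 1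
  ext v
  simp [leastMaximal, diag, swap]

theorem card_quot_eq_ncard_range {X : Type*} {r : X → X → Prop} {f : X → V}
    (h : ∀ x y, r x y ↔ f x = f y) : Nat.card (Quot r) = (Set.range f).ncard :=
  Nat.card_congr ((Quot.congrRight h).trans (Setoid.quotientKerEquivRange f))

theorem card_quot_eq_ncard_leastMaximal_inter_range {X : Type*} {r : X → X → Prop} {κ : X → V}
    {R lt : V → V → Prop} [IsWellOrder V lt] (trans : ∀ u v w, R u v → R v w → R u w)
    (refl : ∀ x, R (κ x) (κ x)) (symm : ∀ x w, R (κ x) w → R w (κ x))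
    (mem_range : ∀ x w, R (κ x) w → w ∈ Set.range κ) (r_iff : ∀ x y, r x y ↔ R (κ x) (κ y)) :
    Nat.card (Quot r) = (leastMaximal R lt ∩ Set.range κ).ncard := by
  have wf : WellFounded lt := IsWellFounded.wf
  let least (x : X) : V := wf.min {w | R (κ x) w} ⟨κ x, refl x⟩
  have rel_least (x : X) : R (κ x) (least x) := wf.min_mem _ _
  have not_lt_least (x : X) (w : V) (hw : R (κ x) w) : ¬ lt w (least x) :=
    wf.not_lt_min {w | R (κ x) w} hw
  have range_least : Set.range least = leastMaximal R lt ∩ Set.range κ := by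
    ext v
    constructor
    · rintro ⟨x, rfl⟩
      have rel_symm := symm x _ (rel_least x)
      exact ⟨⟨trans _ _ _ rel_symm (rel_least x), fun w hw =>
        have hxw := trans _ _ _ (rel_least x) hw
        ⟨trans _ _ _ (symm x w hxw) (rel_least x), not_lt_least x w hxw⟩⟩,
        mem_range x _ (rel_least x)⟩
    · rintro ⟨⟨-, hv⟩, x, rfl⟩
      exact ⟨x, Std.Trichotomous.trichotomous (r := lt) _ _
        (hv _ (rel_least x)).2 (not_lt_least x _ (refl x))⟩
  rw [← range_least]
  refine card_quot_eq_ncard_range fun x y => (r_iff x y).trans ⟨fun hxy => ?_, fun hxy => ?_⟩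
  · have : {w | R (κ x) w} = {w | R (κ y) w} := Set.ext fun w =>
      ⟨trans _ _ _ (symm x _ hxy), trans _ _ _ hxy⟩
    simp only [least, this]
  · exact trans _ _ _ (rel_least x) (hxy ▸ symm y _ (rel_least y))

end MaximalClasses

section EquivariantTransitive

variable {T : Type*} {n : ℕ}

/-- A transitive relation between words of equal length which is invariant under permuting the
positions of both words. It is regarded as a quasi-order on the words related to themselves. -/
structure IsEquivariantTransitive (rel : ∀ n, (Fin n → T) → (Fin n → T) → Prop) : Prop where
  trans : ∀ n c d e, rel n c d → rel n d e → rel n c e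
  comp_perm : ∀ n c d (τ : Equiv.Perm (Fin n)), rel n c d → rel n (c ∘ τ) (d ∘ τ)

/-- The maximal elements of the quasi-order that `rel` induces on words of length `n`. -/
abbrev MaximalWord (rel : ∀ n, (Fin n → T) → (Fin n → T) → Prop) (n : ℕ) : Type _ :=
  {c : Fin n → T // rel n c c ∧ ∀ d, rel n c d → rel n d c}

namespace IsEquivariantTransitive

variable {rel : ∀ n, (Fin n → T) → (Fin n → T) → Prop} (h : IsEquivariantTransitive rel)
include h

/-- Permuting repeatedly gives `c ≤ c ∘ τ ≤ c ∘ τ ^ 2 ≤ ⋯`, which returns to `c`. -/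
theorem symm_of_rel_comp_perm {c : Fin n → T} {τ : Equiv.Perm (Fin n)} (hc : rel n c (c ∘ τ)) :
    rel n (c ∘ τ) c := by
  have rel_pow (i : ℕ) : rel n (c ∘ τ) (c ∘ ⇑(τ ^ (i + 2))) := by
    induction i with
    | zero => simpa [pow_two, Function.comp_assoc] using h.comp_perm n _ _ τ hc
    | succ i ih =>
      refine h.trans n _ _ _ ih ?_
      have := h.comp_perm n _ _ (τ ^ (i + 2)) hc
      rwa [Function.comp_assoc, ← Equiv.Perm.coe_mul, ← pow_succ'] at this
  have := rel_pow (2 * orderOf τ - 2)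
  have hpos := orderOf_pos τ
  rwa [show 2 * orderOf τ - 2 + 2 = orderOf τ * 2 by omega, pow_mul, pow_orderOf_eq_one, one_pow,
    Equiv.Perm.coe_one, Function.comp_id] at this

variable [DecidableEq T]

theorem symm_of_parikh_eq {c c' : Fin n → T} (hc : rel n c c') (hcc' : parikh c = parikh c') :
    rel n c' c := by
  obtain ⟨τ, rfl⟩ := exists_perm_comp_eq_of_parikh_eq hcc'.symm
  exact h.symm_of_rel_comp_perm hc

theorem parikhRel_parikh_iff {c : Fin n → T} {δ : T → ℕ} :
    ParikhRel rel (parikh c) δ ↔ ∃ d, rel n c d ∧ parikh d = δ := by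
  constructor
  · rintro ⟨m, c', d, hcd, hc, rfl⟩
    obtain rfl := length_eq_of_parikh_eq hc
    obtain ⟨τ, rfl⟩ := exists_perm_comp_eq_of_parikh_eq hc.symm
    exact ⟨d ∘ τ, h.comp_perm m _ _ τ hcd, parikh_comp_perm d τ⟩
  · rintro ⟨d, hcd, rfl⟩
    exact ⟨n, c, d, hcd, rfl, rfl⟩

theorem parikhRel_trans {β γ δ : T → ℕ} (hβγ : ParikhRel rel β γ) (hγδ : ParikhRel rel γ δ) :
    ParikhRel rel β δ := by
  obtain ⟨n, b, c, hbc, rfl, rfl⟩ := hβγ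
  obtain ⟨d, hcd, rfl⟩ := h.parikhRel_parikh_iff.1 hγδ
  exact ⟨n, b, d, h.trans n _ _ _ hbc hcd, rfl, rfl⟩

theorem symm_of_parikhRel {c d : Fin n → T} (hcd : rel n c d)
    (hdc : ParikhRel rel (parikh d) (parikh c)) : rel n d c := by
  obtain ⟨c', hdc', hc'⟩ := h.parikhRel_parikh_iff.1 hdc
  exact h.trans n _ _ _ hdc' (h.symm_of_parikh_eq (h.trans n _ _ _ hcd hdc') hc'.symm)

theorem refl_iff {c : Fin n → T} : rel n c c ↔ ParikhRel rel (parikh c) (parikh c) := by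
  refine ⟨fun hc => ⟨n, c, c, hc, rfl, rfl⟩, fun hc => ?_⟩
  obtain ⟨d, hcd, hd⟩ := h.parikhRel_parikh_iff.1 hc
  exact h.trans n _ _ _ hcd (h.symm_of_parikh_eq hcd hd.symm)

theorem maximal_iff {c : Fin n → T} : (∀ d, rel n c d → rel n d c) ↔
    ∀ δ, ParikhRel rel (parikh c) δ → ParikhRel rel δ (parikh c) := by
  refine ⟨fun hc δ hδ => ?_, fun hc d hcd =>
    h.symm_of_parikhRel hcd (hc _ ⟨n, c, d, hcd, rfl, rfl⟩)⟩
  obtain ⟨d, hcd, rfl⟩ := h.parikhRel_parikh_iff.1 hδ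
  exact ⟨n, d, c, hc d hcd, rfl, rfl⟩

theorem exists_perm_equiv_iff {c d : Fin n → T} :
    (∃ τ : Equiv.Perm (Fin n), rel n (c ∘ τ) d ∧ rel n d (c ∘ τ)) ↔
      ParikhRel rel (parikh c) (parikh d) ∧ ParikhRel rel (parikh d) (parikh c) := by
  constructor
  · rintro ⟨τ, hcd, hdc⟩
    exact ⟨⟨n, _, _, hcd, parikh_comp_perm c τ, rfl⟩, ⟨n, _, _, hdc, rfl, parikh_comp_perm c τ⟩⟩
  · rintro ⟨hcd, hdc⟩
    obtain ⟨d', hcd', hd'⟩ := h.parikhRel_parikh_iff.1 hcd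
    obtain ⟨τ, rfl⟩ := exists_perm_comp_eq_of_parikh_eq hd'.symm
    have hcτ := h.comp_perm n _ _ τ hcd'
    rw [← parikh_comp_perm c τ] at hdc
    exact ⟨τ, hcτ, h.symm_of_parikhRel hcτ hdc⟩

theorem card_quot_maximal_eq_ncard_leastMaximal [Fintype T] {lt : (T → ℕ) → (T → ℕ) → Prop}
    [IsWellOrder _ lt] (n : ℕ) :
    Nat.card (Quot fun c d : MaximalWord rel n =>
      ∃ τ : Equiv.Perm (Fin n), rel n (c.1 ∘ τ) d.1 ∧ rel n d.1 (c.1 ∘ τ)) =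
    (leastMaximal (ParikhRel rel) lt ∩ {γ | ∑ t, γ t = n}).ncard := by
  let κ (c : MaximalWord rel n) := parikh c.1
  have symm (c : MaximalWord rel n) (δ : T → ℕ) := h.maximal_iff.1 c.2.2 δ
  have range_κ : leastMaximal (ParikhRel rel) lt ∩ Set.range κ =
      leastMaximal (ParikhRel rel) lt ∩ {γ | ∑ t, γ t = n} := by
    ext γ
    refine and_congr_right fun hγ => ⟨?_, fun hn => ?_⟩
    · rintro ⟨c, rfl⟩
      exact sum_parikh c.1
    · obtain ⟨m, c, -, -, rfl, -⟩ := hγ.1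
      obtain rfl : m = n := (sum_parikh c).symm.trans hn
      exact ⟨⟨c, h.refl_iff.2 hγ.1, h.maximal_iff.2 fun δ hδ => (hγ.2 δ hδ).1⟩, rfl⟩
  rw [← range_κ]
  refine card_quot_eq_ncard_leastMaximal_inter_range (fun _ _ _ => h.parikhRel_trans)
    (fun c => h.refl_iff.1 c.2.1) symm (fun c δ hδ => ?_)
    fun c d => h.exists_perm_equiv_iff.trans (and_iff_left_of_imp (symm c _))
  obtain ⟨d, hcd, rfl⟩ := h.parikhRel_parikh_iff.1 hδ
  have hdc := c.2.2 d hcd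
  exact ⟨⟨d, h.trans n _ _ _ hdc hcd, fun e hde =>
    h.trans n _ _ _ (c.2.2 e (h.trans n _ _ _ hcd hde)) hcd⟩, rfl⟩

theorem quasiPolynomialCount_card_quot_maximal [Finite T]
    (hrel : IsSemilinearSet {p : (T → ℕ) × (T → ℕ) | ParikhRel rel p.1 p.2}) :
    QuasiPolynomialCount fun n =>
      Nat.card (Quot fun c d : MaximalWord rel n =>
        ∃ τ : Equiv.Perm (Fin n), rel n (c.1 ∘ τ) d.1 ∧ rel n d.1 (c.1 ∘ τ)) := by
  cases nonempty_fintype T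
  obtain ⟨lt, _, hlt⟩ := exists_isWellOrder_isSemilinearSet T
  let size : (T → ℕ) →+ ℕ := Fintype.linearCombination ℕ (1 : T → ℕ)
  have size_apply (γ : T → ℕ) : size γ = ∑ t, γ t := by
    simp [size, Fintype.linearCombination_apply]
  have size_single (t : T) : 0 < size (Pi.single t 1) := by simp [size_apply]
  refine quasiPolynomialCount_of_mem ?_
  convert levelCount_mem_of_isSemilinearSet (wt := size) (finite_level_of_addMonoidHom size_single)
    (fun γ hγ => ?_) (isSemilinearSet_leastMaximal hrel hlt) using 1
  · ext n
    rw [h.card_quot_maximal_eq_ncard_leastMaximal (lt := lt)]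
    simp only [levelCount, Set.preimage, size_apply, Set.mem_singleton_iff]
  · ext t
    rw [size_apply] at hγ
    simpa using (Finset.sum_eq_zero_iff.1 hγ) t

end IsEquivariantTransitive

end EquivariantTransitive

section Transfer

theorem QuasiPolynomialCount.congr_eventually {a b : ℕ → ℕ} (ha : QuasiPolynomialCount a)
    (hab : ∀ᶠ n in atTop, b n = a n) : QuasiPolynomialCount b := by
  obtain ⟨f, hf, n₀, hn₀⟩ := ha
  obtain ⟨n₁, hn₁⟩ := eventually_atTop.1 hab
  exact ⟨f, hf, n₀ ⊔ n₁, fun n hn => by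
    rw [hn₁ n (le_of_max_le_right hn), hn₀ n (le_of_max_le_left hn)]⟩

theorem card_quot_maximal_eq_card_quot_maximalWord {T X : Type*} {n : ℕ} {le : X → X → Prop}
    (refl : ∀ x, le x x) {word : X → Fin n → T} (word_injective : Function.Injective word)
    {rel : ∀ n, (Fin n → T) → (Fin n → T) → Prop} (rel_eq : rel n = Relation.Map le word word)
    {act : Equiv.Perm (Fin n) → X → X} (word_act : ∀ τ x, word (act τ x) = word x ∘ τ) :
    Nat.card (Quot fun x y : {x : X // ∀ z, le x z → le z x} =>
      ∃ τ : Equiv.Perm (Fin n), le (act τ x.1) y.1 ∧ le y.1 (act τ x.1)) =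
    Nat.card (Quot fun c d : MaximalWord rel n =>
      ∃ τ : Equiv.Perm (Fin n), rel n (c.1 ∘ τ) d.1 ∧ rel n d.1 (c.1 ∘ τ)) := by
  have rel_word (x y : X) : rel n (word x) (word y) ↔ le x y :=
    rel_eq ▸ Relation.map_apply_apply word_injective word_injective le x y
  have exists_of_rel {c d} (hcd : rel n c d) : (∃ x, word x = c) ∧ ∃ y, word y = d := by
    obtain ⟨x, y, -, hx, hy⟩ := rel_eq ▸ hcd
    exact ⟨⟨x, hx⟩, y, hy⟩
  let toMaximalWord (x : {x : X // ∀ z, le x z → le z x}) : MaximalWord rel n :=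
    ⟨word x.1, (rel_word _ _).2 (refl _), fun d hd => by
      obtain ⟨-, y, rfl⟩ := exists_of_rel hd
      exact (rel_word _ _).2 (x.2 y ((rel_word _ _).1 hd))⟩
  have bijective : Function.Bijective toMaximalWord := by
    refine ⟨fun x y hxy => Subtype.ext (word_injective (congrArg Subtype.val hxy)), ?_⟩
    rintro ⟨c, hcc, hc⟩
    obtain ⟨⟨x, rfl⟩, -⟩ := exists_of_rel hcc
    exact ⟨⟨x, fun z hz => (rel_word _ _).1 (hc _ ((rel_word _ _).2 hz))⟩, rfl⟩
  refine Nat.card_congr (Quot.congr (Equiv.ofBijective _ bijective) fun x y =>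
    exists_congr fun τ => ?_)
  simp only [Equiv.ofBijective_apply, toMaximalWord, ← word_act, rel_word]

end Transfer

section PairWords

open Classical in
/-- A pair `(σ, α)` as a word on `[n]`: position `σ i` carries the marker `i`, every other
position `j` the letter `α j`. -/
noncomputable def MPair.letter {s k n : ℕ} (p : MPair s k n) (j : Fin n) : Fin s ⊕ Fin k :=
  if h : j ∈ Set.range p.σ then .inl h.choose else .inr (p.α ⟨j, h⟩)

namespace MPair

variable {s k m n : ℕ}

theorem letter_of_notMem (p : MPair s k n) {j : Fin n} (hj : j ∉ Set.range p.σ) :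
    p.letter j = .inr (p.α ⟨j, hj⟩) :=
  dif_neg hj

theorem letter_eq_inl_iff (p : MPair s k n) {j : Fin n} {i : Fin s} :
    p.letter j = .inl i ↔ j = p.σ i := by
  by_cases hj : j ∈ Set.range p.σ
  · obtain ⟨i', rfl⟩ := hj
    have hi' : p.letter (p.σ i') = .inl i' := by
      rw [letter, dif_pos (Set.mem_range_self i')]
      exact congrArg _ (p.inj (Set.mem_range_self i').choose_spec)
    rw [hi', Sum.inl.injEq, p.inj.eq_iff]
  · rw [p.letter_of_notMem hj]
    exact iff_of_false (by simp) fun h => hj ⟨i, h.symm⟩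

theorem letter_injective : Function.Injective (letter : MPair s k n → _) := by
  rintro ⟨σ, hσ, α⟩ ⟨σ', hσ', α'⟩ h
  obtain rfl : σ = σ' := funext fun i =>
    (letter_eq_inl_iff ⟨σ', hσ', α'⟩).1 (congrFun h (σ i) ▸ (letter_eq_inl_iff _).2 rfl)
  congr 1
  funext ⟨j, hj⟩
  have hj' := congrFun h j
  rw [letter_of_notMem ⟨σ, hσ, α⟩ hj, letter_of_notMem ⟨σ, hσ', α'⟩ hj] at hj'
  exact Sum.inr.inj hj'

theorem letter_restrict (p : MPair s k n) {π : Fin m → Fin n} (hπ : Function.Injective π)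
    (hsub : Set.range p.σ ⊆ Set.range π) : (p.restrict π hπ hsub).letter = p.letter ∘ π := by
  have apply_σ (i : Fin s) : π ((p.restrict π hπ hsub).σ i) = p.σ i :=
    (hsub (Set.mem_range_self i)).choose_spec
  ext1 j
  by_cases hj : j ∈ Set.range (p.restrict π hπ hsub).σ
  · obtain ⟨i, rfl⟩ := hj
    rw [(letter_eq_inl_iff _).2 rfl, Function.comp_apply, apply_σ, (letter_eq_inl_iff _).2 rfl]
  · have hπj : π j ∉ Set.range p.σ := by
      rintro ⟨i, hi⟩
      exact hj ⟨i, hπ ((apply_σ i).trans hi)⟩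
    rw [letter_of_notMem _ hj, Function.comp_apply, p.letter_of_notMem hπj]
    rfl

end MPair

variable {ι : Type*} {s k : ι → ℕ} {M : ∀ b, Set (Fin (k b) → ℕ)} {m n : ℕ}

/-- The word of a pair, each letter remembering the summand `b` from which the pair comes. -/
noncomputable def pairWord (x : Σ b, FPair (s b) (k b) (M b) n) :
    Fin n → Σ b, Fin (s b) ⊕ Fin (k b) :=
  fun j => ⟨x.1, x.2.1.letter j⟩

theorem pairWord_eq_inl_iff (x : Σ b, FPair (s b) (k b) (M b) n) {j : Fin n} {i : Fin (s x.1)} :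
    pairWord x j = ⟨x.1, .inl i⟩ ↔ j = x.2.1.σ i := by
  simp [pairWord, MPair.letter_eq_inl_iff]

theorem pairWord_injective (hn : 0 < n) :
    Function.Injective (pairWord : (Σ b, FPair (s b) (k b) (M b) n) → _) := by
  rintro ⟨b, p⟩ ⟨b', q⟩ h
  obtain rfl : b = b' := congrArg Sigma.fst (congrFun h ⟨0, hn⟩)
  have : p.1.letter = q.1.letter := funext fun j => by simpa [pairWord] using congrFun h j
  rw [Subtype.ext (MPair.letter_injective this)]

theorem pairWord_restrict (hM : ∀ b, ∀ β ∈ M b, ∀ β' : Fin (k b) → ℕ, (∀ l, β' l ≤ β l) → β' ∈ M b)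
    {π : Fin m → Fin n} (hπ : Function.Injective π) (x : Σ b, FPair (s b) (k b) (M b) n)
    (hsub : Set.range x.2.1.σ ⊆ Set.range π) :
    pairWord ⟨x.1, FPair.restrict (hM x.1) π hπ x.2 hsub⟩ = pairWord x ∘ π :=
  funext fun j => congrArg (Sigma.mk x.1) (congrFun (x.2.1.letter_restrict hπ hsub) j)

/-- Parikh vectors in which every marker of the summand `b` has multiplicity one. -/
def markersOnce (s k : ι → ℕ) (b : ι) : Set ((Σ b, Fin (s b) ⊕ Fin (k b)) → ℕ) :=
  {γ | ∀ i, γ ⟨b, .inl i⟩ = 1}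

theorem isSemilinearSet_markersOnce [Finite ι] (b : ι) : IsSemilinearSet (markersOnce s k b) := by
  have eq_iInter : markersOnce s k b =
      ⋂ i, Pi.evalAddMonoidHom (fun _ => ℕ) (⟨b, .inl i⟩ : Σ b, Fin (s b) ⊕ Fin (k b)) ⁻¹' {1} := by
    ext γ
    simp [markersOnce]
  rw [eq_iInter]
  exact .iInter fun i => (IsSemilinearSet.singleton 1).preimage _

variable [DecidableEq ι]

theorem parikh_pairWord_mem_markersOnce (x : Σ b, FPair (s b) (k b) (M b) n) :
    parikh (pairWord x) ∈ markersOnce s k x.1 := fun i => by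
  simp [parikh_apply, pairWord_eq_inl_iff]

theorem range_subset_of_parikh_mem_markersOnce {x : Σ b, FPair (s b) (k b) (M b) n}
    {π : Fin m → Fin n} (h : parikh (pairWord x ∘ π) ∈ markersOnce s k x.1) :
    Set.range x.2.1.σ ⊆ Set.range π := by
  rintro _ ⟨i, rfl⟩
  obtain ⟨j, hj⟩ := exists_apply_eq_of_parikh_ne_zero (h i ▸ one_ne_zero)
  exact ⟨j, (pairWord_eq_inl_iff x).1 hj⟩

end PairWords

section PairRelation

variable {ι : Type*} {s k : ι → ℕ} {M : ∀ b, Set (Fin (k b) → ℕ)}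
  (hM : ∀ b, ∀ β ∈ M b, ∀ β' : Fin (k b) → ℕ, (∀ l, β' l ≤ β l) → β' ∈ M b)

/-- Compatibility of a family of relations with restriction along injections, as in (C3). -/
def RestrictMonotone
    (le : ∀ n, (Σ b, FPair (s b) (k b) (M b) n) → (Σ b, FPair (s b) (k b) (M b) n) → Prop) : Prop :=
  ∀ (m n : ℕ) (π : Fin m → Fin n) (hπ : Function.Injective π)
    (x y : Σ b, FPair (s b) (k b) (M b) n)
    (hx : Set.range x.2.1.σ ⊆ Set.range π) (hy : Set.range y.2.1.σ ⊆ Set.range π),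
    le n x y → le m ⟨x.1, FPair.restrict (hM x.1) π hπ x.2 hx⟩
      ⟨y.1, FPair.restrict (hM y.1) π hπ y.2 hy⟩

variable {le : ∀ n, (Σ b, FPair (s b) (k b) (M b) n) → (Σ b, FPair (s b) (k b) (M b) n) → Prop}

theorem isEquivariantTransitive_map_pairWord (htrans : ∀ n x y z, le n x y → le n y z → le n x z)
    (hle : RestrictMonotone hM le) :
    IsEquivariantTransitive fun n => Relation.Map (le n) pairWord pairWord where
  trans n c d e := by
    rintro ⟨x, y, hxy, rfl, rfl⟩ ⟨y', z, hyz, hy, rfl⟩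
    rcases Nat.eq_zero_or_pos n with rfl | hn
    · exact ⟨x, y, hxy, rfl, Subsingleton.elim _ _⟩
    · obtain rfl := pairWord_injective hn hy
      exact ⟨x, z, htrans n _ _ _ hxy hyz, rfl, rfl⟩
  comp_perm n c d τ := by
    rintro ⟨x, y, hxy, rfl, rfl⟩
    have subset (A : Set (Fin n)) : A ⊆ Set.range τ := τ.range_eq_univ ▸ Set.subset_univ A
    exact ⟨_, _, hle n n τ τ.injective x y (subset _) (subset _) hxy,
      pairWord_restrict hM τ.injective x _, pairWord_restrict hM τ.injective y _⟩

theorem isSemilinearSet_parikhRel_map_pairWord [Finite ι] [DecidableEq ι]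
    (hle : RestrictMonotone hM le) :
    IsSemilinearSet {p : ((Σ b, Fin (s b) ⊕ Fin (k b)) → ℕ) × ((Σ b, Fin (s b) ⊕ Fin (k b)) → ℕ) |
      ParikhRel (fun n => Relation.Map (le n) pairWord pairWord) p.1 p.2} := by
  let leAt (b b' : ι) (n : ℕ) (x y : Σ b, FPair (s b) (k b) (M b) n) : Prop :=
    x.1 = b ∧ y.1 = b' ∧ le n x y
  have eq_iUnion : {p : ((Σ b, Fin (s b) ⊕ Fin (k b)) → ℕ) × ((Σ b, Fin (s b) ⊕ Fin (k b)) → ℕ) |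
      ParikhRel (fun n => Relation.Map (le n) pairWord pairWord) p.1 p.2} =
      ⋃ b, ⋃ b', {p | ParikhRel (fun n => Relation.Map (leAt b b' n) pairWord pairWord)
        p.1 p.2} := by
    ext p
    simp only [Set.mem_iUnion]
    constructor
    · rintro ⟨n, _, _, ⟨x, y, hxy, rfl, rfl⟩, hp⟩
      exact ⟨x.1, y.1, n, _, _, ⟨x, y, ⟨rfl, rfl, hxy⟩, rfl, rfl⟩, hp⟩
    · rintro ⟨b, b', n, _, _, ⟨x, y, ⟨-, -, hxy⟩, rfl, rfl⟩, hp⟩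
      exact ⟨n, _, _, ⟨x, y, hxy, rfl, rfl⟩, hp⟩
  rw [eq_iUnion]
  refine .iUnion fun b => .iUnion fun b' => isSemilinearSet_parikhRel_of_subword_closed
    (isSemilinearSet_markersOnce b) (isSemilinearSet_markersOnce b') ?_ ?_
  · rintro n _ _ ⟨x, y, ⟨rfl, rfl, -⟩, rfl, rfl⟩
    exact ⟨parikh_pairWord_mem_markersOnce x, parikh_pairWord_mem_markersOnce y⟩
  · rintro m n π _ _ ⟨x, y, ⟨rfl, rfl, hxy⟩, rfl, rfl⟩ hx hy
    have hx := range_subset_of_parikh_mem_markersOnce hx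
    have hy := range_subset_of_parikh_mem_markersOnce hy
    exact ⟨_, _, ⟨rfl, rfl, hle m n π π.injective x y hx hy hxy⟩,
      pairWord_restrict hM π.injective x hx, pairWord_restrict hM π.injective y hy⟩

end PairRelation

theorem quasipolynomial_orbit_count_of_pre_component_functor_general
    {ι : Type*} [Finite ι] (s k : ι → ℕ) (M : ∀ b, Set (Fin (k b) → ℕ))
    (hM : ∀ b, ∀ β ∈ M b, ∀ β' : Fin (k b) → ℕ, (∀ l, β' l ≤ β l) → β' ∈ M b)
    (le : ∀ n, (Σ b, FPair (s b) (k b) (M b) n) → (Σ b, FPair (s b) (k b) (M b) n) → Prop)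
    (hrefl : ∀ n x, le n x x) (htrans : ∀ n x y z, le n x y → le n y z → le n x z)
    (hle : RestrictMonotone hM le) :
    QuasiPolynomialCount (fun n =>
      Nat.card (Quot (fun (x y : {x : Σ b, FPair (s b) (k b) (M b) n //
          ∀ z, le n x z → le n z x}) =>
        ∃ τ : Equiv.Perm (Fin n),
          le n ⟨x.1.1, FPair.restrict (hM x.1.1) (⇑τ) τ.injective x.1.2
              (by rw [Equiv.range_eq_univ]; exact Set.subset_univ _)⟩ y.1 ∧
          le n y.1 ⟨x.1.1, FPair.restrict (hM x.1.1) (⇑τ) τ.injective x.1.2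
              (by rw [Equiv.range_eq_univ]; exact Set.subset_univ _)⟩))) := by
  classical
  have words := isEquivariantTransitive_map_pairWord hM htrans hle
  refine (words.quasiPolynomialCount_card_quot_maximal
    (isSemilinearSet_parikhRel_map_pairWord hM hle)).congr_eventually ?_
  filter_upwards [eventually_gt_atTop 0] with n hn
  exact card_quot_maximal_eq_card_quot_maximalWord (hrefl n) (pairWord_injective hn) rfl
    fun τ x => pairWord_restrict hM τ.injective x (τ.range_eq_univ ▸ Set.subset_univ _)

/-- Quasipolynomial orbit count for pre-component functors: given model functors
indexed by `b ∈ [a]` and compatible quasi-orders `⪯_n` on the disjoint unions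
`F_n = ⊔_b F_{b,n}`, the number of `Sym([n])`-orbits on the set `C(n)` of maximal
equivalence classes is a quasipolynomial in `n` for all `n ≫ 0`. -/
theorem quasipolynomial_orbit_count_of_pre_component_functor
    (a : ℕ) (s k : Fin a → ℕ) (M : ∀ b : Fin a, Set (Fin (k b) → ℕ))
    (hM : ∀ b : Fin a, ∀ β ∈ M b, ∀ β' : Fin (k b) → ℕ, (∀ l, β' l ≤ β l) → β' ∈ M b)
    (sim : ∀ (b : Fin a) (n : ℕ),
      FPair (s b) (k b) (M b) n → FPair (s b) (k b) (M b) n → Prop)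
    (hequiv : ∀ b n, Equivalence (sim b n))
    (ax1 : ∀ (b : Fin a) (m n : ℕ) (π : Fin m → Fin n) (hπ : Function.Injective π)
      (p p' : FPair (s b) (k b) (M b) n) (hp : Set.range p.1.σ ⊆ Set.range π)
      (hp' : Set.range p'.1.σ ⊆ Set.range π),
      sim b n p p' →
        sim b m (FPair.restrict (hM b) π hπ p hp) (FPair.restrict (hM b) π hπ p' hp'))
    (ax2 : ∀ (b : Fin a) (m n : ℕ) (π : Fin m → Fin n) (hπ : Function.Injective π)
      (p : FPair (s b) (k b) (M b) n) (hp : Set.range p.1.σ ⊆ Set.range π)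
      (q : FPair (s b) (k b) (M b) m), sim b m (FPair.restrict (hM b) π hπ p hp) q →
      ∃ (p' : FPair (s b) (k b) (M b) n) (hp' : Set.range p'.1.σ ⊆ Set.range π),
        sim b n p' p ∧ FPair.restrict (hM b) π hπ p' hp' = q)
    (ax3 : ∀ (b : Fin a) (n : ℕ) (p p' : FPair (s b) (k b) (M b) n), sim b n p p' →
      ∀ (i j : Fin n) (hi : i ∉ Set.range p.1.σ) (hi' : i ∉ Set.range p'.1.σ)
        (hj : j ∉ Set.range p.1.σ) (hj' : j ∉ Set.range p'.1.σ),
        (p.1.α ⟨i, hi⟩ = p.1.α ⟨j, hj⟩ ↔ p'.1.α ⟨i, hi'⟩ = p'.1.α ⟨j, hj'⟩))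
    (le : ∀ n : ℕ, (Σ b : Fin a, FPair (s b) (k b) (M b) n) →
      (Σ b : Fin a, FPair (s b) (k b) (M b) n) → Prop)
    (hrefl : ∀ n x, le n x x)
    (htrans : ∀ n x y z, le n x y → le n y z → le n x z)
    (C1 : ∀ n x y, le n x y → x.1 ≤ y.1)
    (C2 : ∀ (n : ℕ) (b : Fin a) (p q : FPair (s b) (k b) (M b) n),
      le n ⟨b, p⟩ ⟨b, q⟩ ↔ sim b n p q)
    (C3 : ∀ (m n : ℕ) (π : Fin m → Fin n) (hπ : Function.Injective π)
      (x y : Σ b : Fin a, FPair (s b) (k b) (M b) n)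
      (hx : Set.range x.2.1.σ ⊆ Set.range π) (hy : Set.range y.2.1.σ ⊆ Set.range π),
      le n x y →
        le m ⟨x.1, FPair.restrict (hM x.1) π hπ x.2 hx⟩
          ⟨y.1, FPair.restrict (hM y.1) π hπ y.2 hy⟩) :
    QuasiPolynomialCount (fun n =>
      Nat.card (Quot (fun (x y : {x : Σ b : Fin a, FPair (s b) (k b) (M b) n //
          ∀ z, le n x z → le n z x}) =>
        ∃ τ : Equiv.Perm (Fin n),
          le n ⟨x.1.1, FPair.restrict (hM x.1.1) (⇑τ) τ.injective x.1.2
              (by rw [Equiv.range_eq_univ]; exact Set.subset_univ _)⟩ y.1 ∧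
          le n y.1 ⟨x.1.1, FPair.restrict (hM x.1.1) (⇑τ) τ.injective x.1.2
              (by rw [Equiv.range_eq_univ]; exact Set.subset_univ _)⟩))) :=
  quasipolynomial_orbit_count_of_pre_component_functor_general s k M hM le hrefl htrans C3
end

section
/- Let d ≥ 1. The cyclic group ℤ/dℤ acts on the set P_n := {β : ℤ/dℤ → ℕ : Σ_{a∈ℤ/dℤ} β(a) = n} by rotation, (e·β)(a) = β(a − e). For e ∈ {0,…,d−1} set f(e) := gcd(d,e) for e ≠ 0 and f(0) := d. Then for every n ∈ ℕ, the number of ℤ/dℤ-orbits on P_n equals (1/d) · Σ_{e=0}^{d−1} c(e,n), where c(e,n) := binom(n/(d/f(e)) + f(e) − 1, f(e) − 1) if (d/f(e)) divides n, and c(e,n) := 0 otherwise. -/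
/-!
By Burnside's lemma, the number of orbits is the average over `e` of the number of compositions
fixed by translation by `e`. A function on a group `G` is fixed by `e` exactly when it is constant
on the left cosets of `⟨e⟩`, so it is a function on `G ⧸ ⟨e⟩`. Each coset has `addOrderOf e`
elements, so the total `n` must be `addOrderOf e` times the total on the quotient, and stars and
bars counts the possibilities.
-/

/-- A weak composition of `n`: a decomposition of `n` as a sum of natural numbers, possibly zero,
indexed by `ι`. -/
abbrev WeakComposition (ι : Type*) [Fintype ι] (n : ℕ) :=
  {β : ι → ℕ // ∑ a, β a = n}

theorem sum_quotient_mk_eq_card_nsmul_sum {G M : Type*} [AddGroup G] [Fintype G] [AddCommMonoid M]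
    (H : AddSubgroup G) [Fintype (G ⧸ H)] (γ : G ⧸ H → M) :
    ∑ a : G, γ a = Nat.card H • ∑ q, γ q := by
  have := Fintype.ofFinite H
  calc ∑ a : G, γ a = ∑ p : (G ⧸ H) × H, γ p.1 :=
        Fintype.sum_equiv AddSubgroup.addGroupEquivQuotientProdAddSubgroup _ _ fun _ => rfl
    _ = Nat.card H • ∑ q, γ q := by
        simp only [Fintype.sum_prod_type, Finset.sum_const, Finset.card_univ,
          Nat.card_eq_fintype_card, Finset.smul_sum]

/-- Functions on an additive group with period `c`, viewed as functions on the quotient by `⟨c⟩`. -/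
def periodicEquiv {G : Type*} [AddGroup G] (c : G) (X : Type*) :
    {f : G → X // Function.Periodic f c} ≃ (G ⧸ AddSubgroup.zmultiples c → X) where
  toFun f := f.2.lift
  invFun γ := ⟨fun a => γ a, fun a => congrArg γ (QuotientAddGroup.eq.2 (by simp))⟩
  left_inv _ := rfl
  right_inv γ := funext fun q => QuotientAddGroup.induction_on q fun _ => rfl

theorem card_orbits_mul_card_addGroup (G X : Type*) [AddGroup G] [Fintype G] [AddAction G X]
    [Finite X] :
    Nat.card (Quotient (AddAction.orbitRel G X)) * Nat.card G =
      ∑ e : G, Nat.card (AddAction.fixedBy X e) := by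
  rw [← Nat.card_prod, ← Nat.card_sigma]
  exact Nat.card_congr (AddAction.sigmaFixedByEquivOrbitsProdAddGroup G X).symm

theorem sum_zmod_eq_sum_range {M : Type*} [AddCommMonoid M] (d : ℕ) [NeZero d] (f : ZMod d → M) :
    ∑ e, f e = ∑ e ∈ Finset.range d, f e := by
  refine Finset.sum_nbij' ZMod.val Nat.cast (fun e _ => Finset.mem_range.2 (ZMod.val_lt e))
    (fun _ _ => Finset.mem_univ _) (fun e _ => ZMod.natCast_zmod_val e)
    (fun e he => ZMod.val_cast_of_lt (Finset.mem_range.1 he)) fun e _ => ?_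
  rw [ZMod.natCast_zmod_val]

theorem index_zmultiples_natCast_zmod (d : ℕ) [NeZero d] (e : ℕ) :
    (AddSubgroup.zmultiples (e : ZMod d)).index = d.gcd e := by
  have hd : 0 < d := NeZero.pos d
  have hindex := (AddSubgroup.zmultiples (e : ZMod d)).card_mul_index
  rw [Nat.card_zmultiples, ZMod.addOrderOf_coe _ hd.ne', Nat.card_zmod] at hindex
  refine Nat.eq_of_mul_eq_mul_left (Nat.div_gcd_pos_of_pos_left e hd) (hindex.trans ?_)
  exact (Nat.div_mul_cancel (Nat.gcd_dvd_left d e)).symm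

namespace WeakComposition

instance finite (ι : Type*) [Fintype ι] (n : ℕ) : Finite (WeakComposition ι n) := by
  classical exact Finite.of_equiv _ (Sym.equivNatSumOfFintype ι n)

theorem card_eq_choose (ι : Type*) [Fintype ι] [Nonempty ι] (n : ℕ) :
    Nat.card (WeakComposition ι n) = (n + Nat.card ι - 1).choose (Nat.card ι - 1) := by
  classical
  have hι : 0 < Nat.card ι := Nat.card_pos
  calc Nat.card (WeakComposition ι n) = (Nat.card ι + n - 1).choose n := by
        rw [← Nat.card_congr (Sym.equivNatSumOfFintype ι n), Sym.natCard_sym_eq_choose]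
    _ = (n + Nat.card ι - 1).choose (Nat.card ι - 1) := by
        rw [add_comm]
        exact Nat.choose_symm_of_eq_add (by omega)

theorem card_subtype_mul_sum_eq (ι : Type*) [Fintype ι] [Nonempty ι] {m : ℕ} (hm : 0 < m) (n : ℕ) :
    Nat.card {γ : ι → ℕ // m * ∑ i, γ i = n} =
      if m ∣ n then (n / m + Nat.card ι - 1).choose (Nat.card ι - 1) else 0 := by
  split_ifs with hdvd
  · rw [← card_eq_choose]
    refine Nat.card_congr (Equiv.subtypeEquivRight fun γ => ?_)
    rw [Nat.eq_div_iff_mul_eq_left hm.ne' hdvd, mul_comm, eq_comm]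
  · have : IsEmpty {γ : ι → ℕ // m * ∑ i, γ i = n} := ⟨fun γ => hdvd ⟨_, γ.2.symm⟩⟩
    exact Nat.card_of_isEmpty

section Translation

variable {G : Type*} [AddGroup G] [Fintype G] {n : ℕ}

/-- Translation of weak compositions indexed by a group. The argument is shifted by `+ e` on the
right rather than `- e`, which gives the same orbits and is a left action even when `G` is not
commutative. -/
instance translation : AddAction G (WeakComposition G n) where
  vadd e β := ⟨fun a => β.1 (a + e), (Equiv.sum_comp (Equiv.addRight e) β.1).trans β.2⟩
  zero_vadd β := Subtype.ext (funext fun a => congrArg β.1 (add_zero a))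
  add_vadd e f β := Subtype.ext (funext fun a => congrArg β.1 (add_assoc a e f).symm)

theorem mem_fixedBy_iff_periodic {e : G} {β : WeakComposition G n} :
    β ∈ AddAction.fixedBy (WeakComposition G n) e ↔ Function.Periodic β.1 e :=
  Subtype.ext_iff.trans funext_iff

theorem orbitRel_iff_exists_sub {β γ : WeakComposition G n} :
    AddAction.orbitRel G (WeakComposition G n) β γ ↔ ∃ e : G, (fun a => β.1 (a - e)) = γ.1 := by
  rw [AddAction.orbitRel_apply, AddAction.mem_orbit_symm]
  refine (Equiv.neg G).exists_congr fun e => Subtype.ext_iff.trans ?_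
  simp only [Equiv.neg_apply, sub_neg_eq_add]
  rfl

theorem card_fixedBy (e : G) :
    Nat.card (AddAction.fixedBy (WeakComposition G n) e) =
      if addOrderOf e ∣ n then
        (n / addOrderOf e + (AddSubgroup.zmultiples e).index - 1).choose
          ((AddSubgroup.zmultiples e).index - 1)
      else 0 := by
  have := Fintype.ofFinite (G ⧸ AddSubgroup.zmultiples e)
  rw [AddSubgroup.index, ← card_subtype_mul_sum_eq _ (addOrderOf_pos e)]
  refine Nat.card_congr ?_
  calc AddAction.fixedBy (WeakComposition G n) e
      ≃ {β : WeakComposition G n // Function.Periodic β.1 e} :=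
        Equiv.subtypeEquivRight fun _ => mem_fixedBy_iff_periodic
    _ ≃ {f : {f : G → ℕ // Function.Periodic f e} // ∑ a, f.1 a = n} :=
        ⟨fun β => ⟨⟨β.1.1, β.2⟩, β.1.2⟩, fun f => ⟨⟨f.1.1, f.2⟩, f.1.2⟩, fun _ => rfl, fun _ => rfl⟩
    _ ≃ {γ : G ⧸ AddSubgroup.zmultiples e → ℕ // addOrderOf e * ∑ q, γ q = n} :=
        (periodicEquiv e ℕ).subtypeEquiv fun f => by
          rw [← Nat.card_zmultiples, ← smul_eq_mul, ← sum_quotient_mk_eq_card_nsmul_sum]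
          rfl

end Translation

end WeakComposition

open WeakComposition in
theorem orbit_count_cyclic_rotation_compositions_general
    (G : Type*) [AddGroup G] [Fintype G] (n : ℕ) :
    (Nat.card (Quot (fun (β γ : {β : G → ℕ // ∑ a : G, β a = n}) =>
      ∃ e : G, (fun a => β.1 (a - e)) = γ.1)) : ℚ) =
    (1 / (Nat.card G : ℚ)) * ∑ e : G,
      (if addOrderOf e ∣ n
        then ((n / addOrderOf e + (AddSubgroup.zmultiples e).index - 1).choose
          ((AddSubgroup.zmultiples e).index - 1) : ℚ)
        else 0) := by
  have hburnside := card_orbits_mul_card_addGroup G (WeakComposition G n)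
  simp only [card_fixedBy] at hburnside
  have horbits := Nat.card_congr (Quot.congrRight fun β γ : WeakComposition G n =>
    orbitRel_iff_exists_sub (β := β) (γ := γ))
  rw [← horbits, one_div, eq_inv_mul_iff_mul_eq₀ (Nat.cast_ne_zero.2 Nat.card_pos.ne'), mul_comm]
  exact_mod_cast hburnside

/-- Orbit count for the rotation action of `ℤ/dℤ` on compositions of `n` into `d`
nonnegative parts, via the orbit-counting lemma: with `f(e) = gcd(d,e)` (so `f(0) = d`),
the number of orbits equals `(1/d) · Σ_{e=0}^{d-1} c(e,n)` where
`c(e,n) = binom(n/(d/f(e)) + f(e) - 1, f(e) - 1)` if `(d/f(e)) ∣ n` and `0` otherwise. -/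
theorem orbit_count_cyclic_rotation_compositions
    (d : ℕ) [NeZero d] (n : ℕ) :
    (Nat.card (Quot (fun (β γ : {β : ZMod d → ℕ // ∑ a : ZMod d, β a = n}) =>
      ∃ e : ZMod d, (fun a => β.1 (a - e)) = γ.1)) : ℚ) =
    (1 / (d : ℚ)) * ∑ e ∈ Finset.range d,
      (if (d / Nat.gcd d e) ∣ n
        then ((n / (d / Nat.gcd d e) + Nat.gcd d e - 1).choose (Nat.gcd d e - 1) : ℚ)
        else 0) := by
  rw [orbit_count_cyclic_rotation_compositions_general, Nat.card_zmod, sum_zmod_eq_sum_range]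
  simp only [ZMod.addOrderOf_coe _ (NeZero.ne d), index_zmultiples_natCast_zmod]
end

section
/- Let F := ℂ(t) be the field of rational functions in one variable over ℂ, let n ≥ 1, and let I_n ⊆ F[x_1,…,x_n] be the ideal generated by the polynomials x_i² − t for i ∈ [n]. For an ordered pair (A,B) of disjoint subsets of [n] with A ∪ B = [n], let P_{A,B} ⊆ F[x_1,…,x_n] be the ideal generated by the polynomials x_i − x_j for (i,j) ∈ (A×A) ∪ (B×B), the polynomials x_i + x_j for (i,j) ∈ A×B, and the polynomial x_1² − t. Then: (a) the minimal prime ideals of F[x_1,…,x_n] over I_n are exactly the ideals P_{A,B}; (b) P_{A,B} = P_{C,D} if and only if {A,B} = {C,D}, so there are exactly 2^{n−1} minimal primes over I_n; and (c) the number of orbits of Sym([n]) (acting on F[x_1,…,x_n] by permuting the variables) on the set of minimal primes over I_n equals ⌊n/2⌋ + 1. -/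
open MvPolynomial

/-- The ideal `P_{A,B}` associated to an ordered pair of subsets `A, B ⊆ [n]`. -/
noncomputable def galoisComponentIdeal (n : ℕ) (hn : 1 ≤ n) (A B : Set (Fin n)) :
    Ideal (MvPolynomial (Fin n) (RatFunc ℂ)) :=
  Ideal.span ({g | ∃ i ∈ A, ∃ j ∈ A, g = X i - X j} ∪
    {g | ∃ i ∈ B, ∃ j ∈ B, g = X i - X j} ∪
    {g | ∃ i ∈ A, ∃ j ∈ B, g = X i + X j} ∪
    {X (⟨0, hn⟩ : Fin n) ^ 2 - C RatFunc.X})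

/-!
Let `R` be a nontrivial algebra over a field `K` containing a square root `x` of a nonsquare
`t : K`. A subset `A` of the variables gives the evaluation `xᵢ ↦ x` for `i ∈ A`, `xᵢ ↦ -x` for
`i ∉ A`. Since `X² - t` is the minimal polynomial of every such `x`, the kernel of this evaluation
depends neither on `R` nor on `x`; it is `P_{A,Aᶜ}`. Applied to the quotients by ideals containing
`P_{A,Aᶜ}`, this shows that `P_{A,Aᶜ}` is maximal. Conversely, if `Q` is a prime over `I`, then the
images of the variables in the domain `K[xᵢ] ⧸ Q` are square roots of `t`, hence equal up to sign,
so the quotient map is itself such an evaluation and `Q = P_{A,Aᶜ}` for some `A`. Thus the primes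
over `I` are all minimal. If `2 ≠ 0` in `K`, then `x ≠ -x`, so the ideal determines which variables
lie in the same block, that is, the set `{A, Aᶜ}`; its orbit under permutations is determined by the
size of the smaller block, which takes the values `0, …, ⌊n/2⌋`.
-/

section SubsetsUpToCompl

variable {σ α β : Type*}

theorem forall_mem_iff_mem_iff_eq_or_eq_compl {A D : Set σ} :
    (∀ i j, (i ∈ A ↔ j ∈ A) ↔ (i ∈ D ↔ j ∈ D)) ↔ D = A ∨ D = Aᶜ := by
  constructor
  · intro h
    by_cases hagree : ∃ i, i ∈ A ↔ i ∈ D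
    · obtain ⟨i, hi⟩ := hagree
      exact .inl (Set.ext fun j ↦ by grind)
    · push Not at hagree
      exact .inr (Set.ext fun j ↦ by grind)
  · rintro (rfl | rfl) <;> grind

theorem card_set_eq_card_range_mul_two [Nonempty σ] {f : Set σ → α}
    (hf : ∀ A D, f A = f D ↔ D = A ∨ D = Aᶜ) :
    Nat.card (Set σ) = Nat.card (Set.range f) * 2 := by
  obtain ⟨i⟩ := ‹Nonempty σ›
  let g : Set σ → Set.range f × Prop := fun A ↦ (⟨f A, A, rfl⟩, i ∈ A)
  have hg : Function.Bijective g := by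
    refine ⟨fun A D h ↦ ?_, ?_⟩
    · have hfAD : f A = f D := congrArg (·.1.1) h
      have hi : (i ∈ A) = (i ∈ D) := congrArg Prod.snd h
      rcases (hf A D).1 hfAD with rfl | rfl
      · rfl
      · simp at hi
    · rintro ⟨⟨_, A, rfl⟩, p⟩
      by_cases hp : (i ∈ A) = p
      · exact ⟨A, by simp [g, hp]⟩
      · have hcompl : (i ∈ Aᶜ) = p := by grind
        exact ⟨Aᶜ, Prod.ext (Subtype.ext ((hf Aᶜ A).2 (.inr (compl_compl A).symm))) hcompl⟩
  simpa [Nat.card_prod] using Nat.card_congr (Equiv.ofBijective g hg)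

theorem exists_perm_image_eq_iff_ncard_eq [Finite σ] {A D : Set σ} :
    (∃ π : Equiv.Perm σ, π '' A = D) ↔ A.ncard = D.ncard := by
  classical
  constructor
  · rintro ⟨π, rfl⟩
    exact (Set.ncard_image_of_injective A π.injective).symm
  · intro h
    obtain ⟨e⟩ : Nonempty (A ≃ D) := Finite.card_eq.1 h
    refine ⟨e.extendSubtype, Set.eq_of_subset_of_ncard_le ?_ ?_⟩
    · rintro _ ⟨i, hi, rfl⟩
      exact e.extendSubtype_mem i hi
    · rw [Set.ncard_image_of_injective _ (Equiv.injective _), h]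

/-- The size of the smaller block of the partition `{A, Aᶜ}`. It classifies the subsets of a finite
type up to permutations and complements. -/
noncomputable def minBlockCard (A : Set σ) : ℕ := min A.ncard Aᶜ.ncard

theorem exists_perm_eq_image_or_eq_compl_iff_minBlockCard_eq [Finite σ] {A D : Set σ} :
    (∃ π : Equiv.Perm σ, D = π '' A ∨ D = (π '' A)ᶜ) ↔ minBlockCard A = minBlockCard D := by
  have hA := Set.ncard_add_ncard_compl A
  have hD := Set.ncard_add_ncard_compl D
  calc (∃ π : Equiv.Perm σ, D = π '' A ∨ D = (π '' A)ᶜ)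
      ↔ (∃ π : Equiv.Perm σ, π '' A = D) ∨ ∃ π : Equiv.Perm σ, π '' A = Dᶜ := by
        simp only [exists_or, eq_comm (a := D), compl_eq_comm, eq_comm (a := Dᶜ)]
    _ ↔ A.ncard = D.ncard ∨ A.ncard = Dᶜ.ncard := by
        simp only [exists_perm_image_eq_iff_ncard_eq]
    _ ↔ minBlockCard A = minBlockCard D := by
        unfold minBlockCard
        omega

theorem range_minBlockCard [Finite σ] :
    Set.range (minBlockCard : Set σ → ℕ) = Set.Iic (Nat.card σ / 2) := by
  ext k
  simp only [Set.mem_range, Set.mem_Iic, minBlockCard]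
  constructor
  · rintro ⟨A, rfl⟩
    have := Set.ncard_add_ncard_compl A
    omega
  · intro hk
    obtain ⟨A, -, hA⟩ := Set.exists_subset_card_eq
      (show k ≤ (Set.univ : Set σ).ncard by rw [Set.ncard_univ]; omega)
    have := Set.ncard_add_ncard_compl A
    exact ⟨A, by omega⟩

theorem card_quot_eq_card_range {γ : Type*} {p : α → β} (hp : Function.Surjective p) {c : α → γ}
    {r : β → β → Prop} (h : ∀ a b, r (p a) (p b) ↔ c a = c b) :
    Nat.card (Quot r) = Nat.card (Set.range c) := by
  have hr : Equivalence r := by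
    refine ⟨hp.forall.2 fun a ↦ (h a a).2 rfl, @fun x y ↦ ?_, @fun x y z ↦ ?_⟩
    · obtain ⟨⟨a, rfl⟩, b, rfl⟩ := And.intro (hp x) (hp y)
      simpa only [h] using Eq.symm
    · obtain ⟨⟨a, rfl⟩, ⟨b, rfl⟩, d, rfl⟩ := And.intro (hp x) (And.intro (hp y) (hp z))
      simpa only [h] using Eq.trans
  have hker : Setoid.ker (fun a ↦ Quot.mk r (p a)) = Setoid.ker c :=
    Setoid.ext fun a b ↦ (hr.quot_mk_eq_iff _ _).trans (h a b)
  calc Nat.card (Quot r)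
      = Nat.card (Quotient (Setoid.ker fun a ↦ Quot.mk r (p a))) :=
        (Nat.card_congr (Setoid.quotientKerEquivOfSurjective _ (Quot.mk_surjective.comp hp))).symm
    _ = Nat.card (Quotient (Setoid.ker c)) := by rw [hker]
    _ = Nat.card (Set.range c) := Nat.card_congr (Setoid.quotientKerEquivRange c)

end SubsetsUpToCompl

section SignEval

variable {σ K R S : Type*} [CommRing K] [CommRing R] [Algebra K R] [CommRing S] [Algebra K S]

open scoped Classical in
/-- The evaluation `xᵢ ↦ x` for `i ∈ A`, `xᵢ ↦ -x` for `i ∉ A`. For nonsquare `t` in a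
field `K` and `x ^ 2 = t`, its kernel is the component ideal `P_{A,Aᶜ}`. -/
noncomputable def signEval (A : Set σ) (x : R) : MvPolynomial σ K →ₐ[K] R :=
  aeval fun i ↦ if i ∈ A then x else -x

theorem signEval_X_of_mem {A : Set σ} {i : σ} (hi : i ∈ A) (x : R) :
    signEval (K := K) A x (X i) = x := by
  simp [signEval, hi]

theorem signEval_X_of_notMem {A : Set σ} {i : σ} (hi : i ∉ A) (x : R) :
    signEval (K := K) A x (X i) = -x := by
  simp [signEval, hi]

theorem signEval_X_sq (A : Set σ) (x : R) (i : σ) : signEval (K := K) A x (X i) ^ 2 = x ^ 2 := by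
  by_cases hi : i ∈ A <;> simp [signEval, hi]

theorem eq_signEval {φ : MvPolynomial σ K →ₐ[K] R} {A : Set σ} {x : R}
    (hmem : ∀ i ∈ A, φ (X i) = x) (hnotMem : ∀ i ∉ A, φ (X i) = -x) : φ = signEval A x := by
  ext i
  by_cases hi : i ∈ A
  · rw [hmem i hi, signEval_X_of_mem hi]
  · rw [hnotMem i hi, signEval_X_of_notMem hi]

theorem comp_signEval (φ : R →ₐ[K] S) (A : Set σ) (x : R) :
    φ.comp (signEval A x) = signEval A (φ x) :=
  eq_signEval (fun i hi ↦ by simp [signEval_X_of_mem hi])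
    (fun i hi ↦ by simp [signEval_X_of_notMem hi])

theorem aeval_signEval_X (A : Set σ) (x : R) (f : MvPolynomial σ K) :
    Polynomial.aeval x (signEval A (Polynomial.X : Polynomial K) f) = signEval A x f := by
  simpa using DFunLike.congr_fun (comp_signEval (K := K) (Polynomial.aeval x) A Polynomial.X) f

theorem signEval_image_comp_rename (π : Equiv.Perm σ) (A : Set σ) (x : R) :
    (signEval (π '' A) x).comp (rename π) = signEval (K := K) A x :=
  eq_signEval (fun i hi ↦ by simpa using signEval_X_of_mem (Set.mem_image_of_mem π hi) x)
    (fun i hi ↦ by simpa using signEval_X_of_notMem (mt π.injective.mem_set_image.1 hi) x)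

theorem map_rename_ker_signEval (π : Equiv.Perm σ) (A : Set σ) (x : R) :
    Ideal.map (rename π : MvPolynomial σ K →ₐ[K] MvPolynomial σ K) (RingHom.ker (signEval A x)) =
      RingHom.ker (signEval (K := K) (π '' A) x) := by
  have hcomap : RingHom.ker (signEval (K := K) A x) =
      Ideal.comap (rename π : MvPolynomial σ K →ₐ[K] MvPolynomial σ K)
        (RingHom.ker (signEval (K := K) (π '' A) x)) := by
    rw [← signEval_image_comp_rename π A x]
    rfl
  rw [hcomap, Ideal.map_comap_of_surjective _ (rename_surjective π π.surjective)]

theorem signEval_X_eq_iff {A : Set σ} {x : R} (hx : x ≠ -x) {i j : σ} :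
    signEval (K := K) A x (X i) = signEval (K := K) A x (X j) ↔ (i ∈ A ↔ j ∈ A) := by
  by_cases hi : i ∈ A <;> by_cases hj : j ∈ A <;>
    simp [signEval_X_of_mem, signEval_X_of_notMem, hi, hj, hx, hx.symm]

theorem exists_eq_signEval [IsDomain R] {φ : MvPolynomial σ K →ₐ[K] R} (i₀ : σ)
    (hφ : ∀ i, φ (X i) ^ 2 = φ (X i₀) ^ 2) : ∃ A, φ = signEval A (φ (X i₀)) :=
  ⟨{i | φ (X i) = φ (X i₀)},
    eq_signEval (fun _ hi ↦ hi) fun i hi ↦ (sq_eq_sq_iff_eq_or_eq_neg.1 (hφ i)).resolve_left hi⟩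

end SignEval

section SquareRoots

variable {σ K R : Type*} [CommRing K] [CommRing R] [Algebra K R]

variable (σ) in
/-- The ideal `(xᵢ² - t : i ∈ σ)`, which is `I_n` for `σ = [n]` over `ℂ(t)`. -/
noncomputable def squareRootsIdeal (t : K) : Ideal (MvPolynomial σ K) :=
  Ideal.span {g | ∃ i : σ, g = X i ^ 2 - C t}

/-- The ideal `P_{A,B}` over an arbitrary ring, with an arbitrary base point `i₀` in place of
the first variable. -/
noncomputable def componentIdeal (t : K) (i₀ : σ) (A B : Set σ) : Ideal (MvPolynomial σ K) :=
  Ideal.span ({g | ∃ i ∈ A, ∃ j ∈ A, g = X i - X j} ∪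
    {g | ∃ i ∈ B, ∃ j ∈ B, g = X i - X j} ∪
    {g | ∃ i ∈ A, ∃ j ∈ B, g = X i + X j} ∪
    {X i₀ ^ 2 - C t})

theorem componentIdeal_le_iff {t : K} {i₀ : σ} {A B : Set σ} {P : Ideal (MvPolynomial σ K)} :
    componentIdeal t i₀ A B ≤ P ↔
      (∀ i ∈ A, ∀ j ∈ A, X i - X j ∈ P) ∧ (∀ i ∈ B, ∀ j ∈ B, X i - X j ∈ P) ∧
        (∀ i ∈ A, ∀ j ∈ B, X i + X j ∈ P) ∧ X i₀ ^ 2 - C t ∈ P := by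
  simp only [componentIdeal, Ideal.span_le, Set.union_subset_iff, Set.singleton_subset_iff,
    SetLike.mem_coe, and_assoc]
  refine and_congr ?_ (and_congr ?_ (and_congr_left' ?_)) <;>
    exact ⟨fun h i hi j hj ↦ h ⟨i, hi, j, hj, rfl⟩, fun h _ ⟨i, hi, j, hj, hg⟩ ↦ hg ▸ h i hi j hj⟩

theorem componentIdeal_comm (t : K) (i₀ : σ) (A B : Set σ) :
    componentIdeal t i₀ A B = componentIdeal t i₀ B A := by
  refine eq_of_forall_ge_iff fun P ↦ ?_
  grind [componentIdeal_le_iff, add_comm (X _ : MvPolynomial σ K)]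

theorem squareRootsIdeal_le_iff {t : K} {P : Ideal (MvPolynomial σ K)} :
    squareRootsIdeal σ t ≤ P ↔ ∀ i, X i ^ 2 - C t ∈ P := by
  simp only [squareRootsIdeal, Ideal.span_le]
  exact ⟨fun h i ↦ h ⟨i, rfl⟩, fun h _ ⟨i, hg⟩ ↦ hg ▸ h i⟩

theorem squareRootsIdeal_le_ker_iff {t : K} {φ : MvPolynomial σ K →ₐ[K] R} :
    squareRootsIdeal σ t ≤ RingHom.ker φ ↔ ∀ i, φ (X i) ^ 2 = algebraMap K R t := by
  simp [squareRootsIdeal_le_iff, sub_eq_zero]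

theorem componentIdeal_compl_le_ker_iff {t : K} {i₀ : σ} {A : Set σ}
    {φ : MvPolynomial σ K →ₐ[K] R} :
    componentIdeal t i₀ A Aᶜ ≤ RingHom.ker φ ↔
      ∃ x, x ^ 2 = algebraMap K R t ∧ φ = signEval A x := by
  simp only [componentIdeal_le_iff, RingHom.mem_ker, map_sub, map_add, map_pow, sub_eq_zero,
    add_eq_zero_iff_eq_neg, ← algebraMap_eq, AlgHom.commutes]
  constructor
  · rintro ⟨hA, hAc, hAAc, hsq⟩
    by_cases h₀ : i₀ ∈ A
    · exact ⟨φ (X i₀), hsq, eq_signEval (fun i hi ↦ hA i hi i₀ h₀)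
        fun i hi ↦ by rw [hAAc i₀ h₀ i hi, neg_neg]⟩
    · exact ⟨-φ (X i₀), by rw [neg_sq, hsq], eq_signEval (fun i hi ↦ hAAc i hi i₀ h₀)
        fun i hi ↦ by rw [neg_neg, hAc i hi i₀ h₀]⟩
  · rintro ⟨x, hx, rfl⟩
    refine ⟨fun i hi j hj ↦ ?_, fun i hi j hj ↦ ?_, fun i hi j hj ↦ ?_, ?_⟩
    · rw [signEval_X_of_mem hi, signEval_X_of_mem hj]
    · rw [signEval_X_of_notMem hi, signEval_X_of_notMem hj]
    · rw [signEval_X_of_mem hi, signEval_X_of_notMem hj, neg_neg]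
    · rw [signEval_X_sq, hx]

end SquareRoots

section Field

variable {σ K R : Type*} [Field K] [CommRing R] [Algebra K R] {t : K}

theorem minpoly_eq_X_sq_sub_C [Nontrivial R] (ht : ¬IsSquare t) {x : R}
    (hx : x ^ 2 = algebraMap K R t) : minpoly K x = Polynomial.X ^ 2 - Polynomial.C t :=
  (minpoly.eq_of_irreducible_of_monic
    (X_pow_sub_C_irreducible_of_prime Nat.prime_two fun b hb ↦ ht ⟨b, by rw [← hb, sq]⟩)
    (by simp [hx]) (Polynomial.monic_X_pow_sub_C t two_ne_zero)).symm

theorem ker_signEval [Nontrivial R] (ht : ¬IsSquare t) {x : R} (hx : x ^ 2 = algebraMap K R t)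
    (i₀ : σ) (A : Set σ) : RingHom.ker (signEval (K := K) A x) = componentIdeal t i₀ A Aᶜ := by
  refine le_antisymm (fun f hf ↦ ?_) (componentIdeal_compl_le_ker_iff.2 ⟨x, hx, rfl⟩)
  set P := componentIdeal t i₀ A Aᶜ
  obtain ⟨y, hy, hmk⟩ := componentIdeal_compl_le_ker_iff.1 (Ideal.Quotient.mkₐ_ker K P).ge
  -- Specialise the variables of `f` to `±X`; the resulting univariate polynomial recovers the
  -- values of `f` at both `x` and `y`.
  let g : Polynomial K := signEval A Polynomial.X f
  have hdvd : Polynomial.X ^ 2 - Polynomial.C t ∣ g := by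
    rw [← minpoly_eq_X_sq_sub_C ht hx]
    exact minpoly.dvd K x ((aeval_signEval_X A x f).trans hf)
  have hgy : Polynomial.aeval y g = 0 := by
    obtain ⟨q, hq⟩ := hdvd
    simp [hq, hy]
  rw [← Ideal.Quotient.mkₐ_ker K P, hmk]
  exact (aeval_signEval_X A y f).symm.trans hgy

theorem ne_neg_of_sq_eq_algebraMap [NeZero (2 : K)] [Nontrivial R] (ht : ¬IsSquare t) {x : R}
    (hx : x ^ 2 = algebraMap K R t) : x ≠ -x := by
  intro h
  have htwo : (2 : K) • x = 0 := by
    rw [two_smul]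
    exact add_eq_zero_iff_eq_neg.2 h
  have hx₀ : x = 0 := (isUnit_iff_ne_zero.2 two_ne_zero).smul_eq_zero.1 htwo
  have ht₀ : t = 0 := by simpa [hx₀] using hx.symm
  exact ht (ht₀ ▸ IsSquare.zero)

theorem exists_sq_eq_algebraMap_algebraicClosure (t : K) :
    ∃ s : AlgebraicClosure K, s ^ 2 = algebraMap K _ t :=
  IsAlgClosed.exists_pow_nat_eq _ two_pos

theorem isMaximal_componentIdeal_compl (ht : ¬IsSquare t) (i₀ : σ) (A : Set σ) :
    (componentIdeal t i₀ A Aᶜ).IsMaximal := by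
  refine Ideal.isMaximal_def.2 ⟨?_, fun J hJ ↦ ?_⟩
  · obtain ⟨s, hs⟩ := exists_sq_eq_algebraMap_algebraicClosure t
    rw [← ker_signEval ht hs]
    exact RingHom.ker_ne_top _
  · by_contra hJ_top
    have : Nontrivial (MvPolynomial σ K ⧸ J) := Ideal.Quotient.nontrivial_iff.2 hJ_top
    have hmk_ker : RingHom.ker (Ideal.Quotient.mkₐ K J) = J := Ideal.Quotient.mkₐ_ker K J
    obtain ⟨y, hy, hmk⟩ := componentIdeal_compl_le_ker_iff.1 (hJ.le.trans hmk_ker.ge)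
    rw [hmk, ker_signEval ht hy] at hmk_ker
    exact hJ.ne hmk_ker

theorem squareRootsIdeal_le_componentIdeal_compl (ht : ¬IsSquare t) (i₀ : σ) (A : Set σ) :
    squareRootsIdeal σ t ≤ componentIdeal t i₀ A Aᶜ := by
  obtain ⟨s, hs⟩ := exists_sq_eq_algebraMap_algebraicClosure t
  rw [← ker_signEval ht hs, squareRootsIdeal_le_ker_iff]
  exact fun i ↦ (signEval_X_sq A s i).trans hs

theorem exists_eq_componentIdeal_compl (ht : ¬IsSquare t) (i₀ : σ) {Q : Ideal (MvPolynomial σ K)}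
    [Q.IsPrime] (hQ : squareRootsIdeal σ t ≤ Q) : ∃ A, Q = componentIdeal t i₀ A Aᶜ := by
  have hsq : ∀ i, Ideal.Quotient.mkₐ K Q (X i) ^ 2 = algebraMap K _ t :=
    squareRootsIdeal_le_ker_iff.1 (hQ.trans (Ideal.Quotient.mkₐ_ker K Q).ge)
  obtain ⟨A, hA⟩ := exists_eq_signEval i₀ fun i ↦ (hsq i).trans (hsq i₀).symm
  refine ⟨A, ?_⟩
  rw [← ker_signEval ht (hsq i₀), ← hA]
  exact (Ideal.Quotient.mkₐ_ker K Q).symm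

theorem minimalPrimes_squareRootsIdeal (ht : ¬IsSquare t) (i₀ : σ) :
    (squareRootsIdeal σ t).minimalPrimes = Set.range fun A ↦ componentIdeal t i₀ A Aᶜ := by
  ext Q
  constructor
  · rintro ⟨⟨_, hQ⟩, -⟩
    obtain ⟨A, rfl⟩ := exists_eq_componentIdeal_compl ht i₀ hQ
    exact ⟨A, rfl⟩
  · rintro ⟨A, rfl⟩
    have hmax := isMaximal_componentIdeal_compl ht i₀ A
    refine ⟨⟨hmax.isPrime, squareRootsIdeal_le_componentIdeal_compl ht i₀ A⟩, ?_⟩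
    rintro Q ⟨_, hQ⟩ hle
    obtain ⟨D, rfl⟩ := exists_eq_componentIdeal_compl ht i₀ hQ
    exact ((isMaximal_componentIdeal_compl ht i₀ D).eq_of_le hmax.ne_top hle).ge

theorem map_rename_componentIdeal_compl (ht : ¬IsSquare t) (i₀ : σ) (π : Equiv.Perm σ)
    (A : Set σ) :
    Ideal.map (rename π : MvPolynomial σ K →ₐ[K] MvPolynomial σ K) (componentIdeal t i₀ A Aᶜ) =
      componentIdeal t i₀ (π '' A) (π '' A)ᶜ := by
  obtain ⟨s, hs⟩ := exists_sq_eq_algebraMap_algebraicClosure t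
  rw [← ker_signEval ht hs, ← ker_signEval ht hs, map_rename_ker_signEval]

theorem X_sub_X_mem_componentIdeal_compl_iff [NeZero (2 : K)] (ht : ¬IsSquare t) {i₀ i j : σ}
    {A : Set σ} : X i - X j ∈ componentIdeal t i₀ A Aᶜ ↔ (i ∈ A ↔ j ∈ A) := by
  obtain ⟨s, hs⟩ := exists_sq_eq_algebraMap_algebraicClosure t
  rw [← ker_signEval ht hs, RingHom.mem_ker, map_sub, sub_eq_zero,
    signEval_X_eq_iff (ne_neg_of_sq_eq_algebraMap ht hs)]

theorem componentIdeal_compl_eq_iff [NeZero (2 : K)] (ht : ¬IsSquare t) (i₀ : σ) (A D : Set σ) :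
    componentIdeal t i₀ A Aᶜ = componentIdeal t i₀ D Dᶜ ↔ D = A ∨ D = Aᶜ := by
  constructor
  · intro h
    refine forall_mem_iff_mem_iff_eq_or_eq_compl.1 fun i j ↦ ?_
    rw [← X_sub_X_mem_componentIdeal_compl_iff ht (i₀ := i₀), h,
      X_sub_X_mem_componentIdeal_compl_iff ht]
  · rintro (rfl | rfl)
    · rfl
    · rw [compl_compl, componentIdeal_comm]

theorem card_minimalPrimes_squareRootsIdeal [NeZero (2 : K)] [Finite σ] [Nonempty σ]
    (ht : ¬IsSquare t) :
    Nat.card (squareRootsIdeal σ t).minimalPrimes = 2 ^ (Nat.card σ - 1) := by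
  obtain ⟨i₀⟩ := ‹Nonempty σ›
  have h : 2 ^ Nat.card σ = Nat.card (squareRootsIdeal σ t).minimalPrimes * 2 := by
    rw [minimalPrimes_squareRootsIdeal ht i₀,
      ← card_set_eq_card_range_mul_two (componentIdeal_compl_eq_iff ht i₀)]
    simp [Set, Nat.card_fun]
  rw [← Nat.sub_add_cancel (Nat.card_pos (α := σ)), pow_succ] at h
  exact (Nat.eq_of_mul_eq_mul_right two_pos h).symm

theorem card_quot_minimalPrimes_squareRootsIdeal [NeZero (2 : K)] [Finite σ] [Nonempty σ]
    (ht : ¬IsSquare t) :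
    Nat.card (Quot fun P Q : (squareRootsIdeal σ t).minimalPrimes ↦
      ∃ π : Equiv.Perm σ, Ideal.map (rename ⇑π) P.1 = Q.1) = Nat.card σ / 2 + 1 := by
  obtain ⟨i₀⟩ := ‹Nonempty σ›
  rw [minimalPrimes_squareRootsIdeal ht i₀, card_quot_eq_card_range
    Set.rangeFactorization_surjective (c := minBlockCard), range_minBlockCard]
  · simp
  · intro A D
    simp only [Set.rangeFactorization_coe, map_rename_componentIdeal_compl ht,
      componentIdeal_compl_eq_iff ht, exists_perm_eq_image_or_eq_compl_iff_minBlockCard_eq]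

theorem minimal_primes_of_galois_example_general [NeZero (2 : K)] [Finite σ] (ht : ¬IsSquare t)
    (i₀ : σ) :
    (squareRootsIdeal σ t).minimalPrimes =
      {P | ∃ A B : Set σ, Disjoint A B ∧ A ∪ B = Set.univ ∧ P = componentIdeal t i₀ A B} ∧
    (∀ A B C D : Set σ, Disjoint A B → A ∪ B = Set.univ → Disjoint C D → C ∪ D = Set.univ →
      (componentIdeal t i₀ A B = componentIdeal t i₀ C D ↔
        (A = C ∧ B = D) ∨ (A = D ∧ B = C))) ∧
    Nat.card (squareRootsIdeal σ t).minimalPrimes = 2 ^ (Nat.card σ - 1) ∧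
    Nat.card (Quot fun P Q : (squareRootsIdeal σ t).minimalPrimes ↦
      ∃ π : Equiv.Perm σ, Ideal.map (rename ⇑π) P.1 = Q.1) = Nat.card σ / 2 + 1 := by
  have : Nonempty σ := ⟨i₀⟩
  have eq_compl {A B : Set σ} (h : Disjoint A B) (h' : A ∪ B = Set.univ) : B = Aᶜ :=
    (IsCompl.compl_eq ⟨h, codisjoint_iff.2 h'⟩).symm
  refine ⟨?_, ?_, card_minimalPrimes_squareRootsIdeal ht,
    card_quot_minimalPrimes_squareRootsIdeal ht⟩
  · rw [minimalPrimes_squareRootsIdeal ht i₀]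
    ext P
    constructor
    · rintro ⟨A, rfl⟩
      exact ⟨A, Aᶜ, disjoint_compl_right, Set.union_compl_self A, rfl⟩
    · rintro ⟨A, B, hAB, hAB', rfl⟩
      obtain rfl := eq_compl hAB hAB'
      exact ⟨A, rfl⟩
  · intro A B D E hAB hAB' hDE hDE'
    obtain rfl := eq_compl hAB hAB'
    obtain rfl := eq_compl hDE hDE'
    rw [componentIdeal_compl_eq_iff ht]
    grind [compl_compl]

end Field

theorem not_isSquare_ratFunc_X {K : Type*} [Field K] : ¬IsSquare (RatFunc.X : RatFunc K) := by
  rintro ⟨r, hr⟩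
  have hr₀ : r ≠ 0 := by
    rintro rfl
    exact RatFunc.X_ne_zero (by simpa using hr)
  have hdeg := congrArg RatFunc.intDegree hr
  rw [RatFunc.intDegree_mul hr₀ hr₀, RatFunc.intDegree_X] at hdeg
  omega

/-- Over `F = ℂ(t)`, the ideal `I_n = (x_i² - t : i ∈ [n])` has minimal primes exactly the
ideals `P_{A,B}` for partitions `[n] = A ⊔ B`; two such coincide iff `{A,B} = {C,D}`, there
are `2^{n-1}` of them, and `Sym([n])` has `⌊n/2⌋ + 1` orbits on them. -/
theorem minimal_primes_of_galois_example (n : ℕ) (hn : 1 ≤ n) :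
    ((Ideal.span {g : MvPolynomial (Fin n) (RatFunc ℂ) |
        ∃ i : Fin n, g = X i ^ 2 - C RatFunc.X}).minimalPrimes =
      {P | ∃ A B : Set (Fin n), Disjoint A B ∧ A ∪ B = Set.univ ∧
        P = galoisComponentIdeal n hn A B}) ∧
    (∀ A B C D : Set (Fin n),
      Disjoint A B → A ∪ B = Set.univ → Disjoint C D → C ∪ D = Set.univ →
      (galoisComponentIdeal n hn A B = galoisComponentIdeal n hn C D ↔
        ((A = C ∧ B = D) ∨ (A = D ∧ B = C)))) ∧
    Nat.card {P : Ideal (MvPolynomial (Fin n) (RatFunc ℂ)) //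
        P ∈ (Ideal.span {g : MvPolynomial (Fin n) (RatFunc ℂ) |
          ∃ i : Fin n, g = X i ^ 2 - C RatFunc.X}).minimalPrimes} = 2 ^ (n - 1) ∧
    Nat.card (Quot (fun (P Q : {P : Ideal (MvPolynomial (Fin n) (RatFunc ℂ)) //
        P ∈ (Ideal.span {g : MvPolynomial (Fin n) (RatFunc ℂ) |
          ∃ i : Fin n, g = X i ^ 2 - C RatFunc.X}).minimalPrimes}) =>
      ∃ π : Equiv.Perm (Fin n), Ideal.map (rename ⇑π) P.1 = Q.1)) = n / 2 + 1 := by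
  have h := minimal_primes_of_galois_example_general
    (not_isSquare_ratFunc_X (K := ℂ)) (⟨0, hn⟩ : Fin n)
  rwa [Nat.card_fin] at h
end

section
/- Let K be a field and n ≥ 2. Let R := K[x_e : e ∈ Sym²([n])] be the polynomial ring with one variable x_{{i,j}} for every unordered pair {i,j} with i, j ∈ [n] (allowing i = j), and let I ⊆ R be the ideal generated by all cycle monomials x_{{i_1,i_2}}·x_{{i_2,i_3}}·⋯·x_{{i_k,i_1}} with 3 ≤ k ≤ n and i_1,…,i_k ∈ [n] pairwise distinct. For a tree T with vertex set [n], let P_T ⊆ R be the ideal generated by the variables {x_{{i,j}} : i ≠ j and {i,j} is not an edge of T}. Then T ↦ P_T is a bijection from the set of trees with vertex set [n] to the set of minimal prime ideals of R over I; in particular, the number of minimal primes of R over I equals n^{n−2}. -/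
open MvPolynomial

/-- The ideal generated by all cycle monomials
`x_{{i₁,i₂}} x_{{i₂,i₃}} ⋯ x_{{i_k,i₁}}` for `3 ≤ k ≤ n` and distinct `i₁,…,i_k ∈ [n]`. -/
noncomputable def cycleIdeal (K : Type) [Field K] (n : ℕ) :
    Ideal (MvPolynomial (Sym2 (Fin n)) K) :=
  Ideal.span {g | ∃ k : ℕ, ∃ _h3 : 3 ≤ k, ∃ _hn : k ≤ n, ∃ f : Fin k → Fin n,
    Function.Injective f ∧
    g = ∏ a : Fin k, X (s(f a, f ⟨(a.1 + 1) % k, Nat.mod_lt _ (by omega)⟩))}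

/-- The prime associated to a tree `T` on the vertex set `[n]`: the ideal generated by the
variables `x_{{i,j}}` with `i ≠ j` such that `{i,j}` is not an edge of `T`. -/
noncomputable def treePrime (K : Type) [Field K] (n : ℕ) (T : SimpleGraph (Fin n)) :
    Ideal (MvPolynomial (Sym2 (Fin n)) K) :=
  Ideal.span {g | ∃ i j : Fin n, i ≠ j ∧ ¬ T.Adj i j ∧ g = X s(i, j)}

/-!
For a prime ideal `P` of the polynomial ring, let `G_P` be the graph of all pairs whose variable is
not in `P`. By primality `P` contains all cycle monomials iff `G_P` has no cycle, and `P` contains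
`P_T` iff `G_P ≤ T`. Hence the minimal primes over the cycle ideal are the ideals `P_T` of the
maximal acyclic graphs `T`, which are the trees.

For the count, a tree on `[n]` with a chosen vertex is a forest with one root, and the number
`F(a, b)` of forests with `a` non-root vertices and `b` roots is determined by deleting the roots
and making their `j` children the new roots: `F(a, b) = ∑ j, C(a, j) b ^ j F(a - j, j)`, whence
`F(a, b) = b (a + b) ^ (a - 1)` by induction on `a`.
-/

section PolynomialIdeals

variable {R σ V : Type*} [CommRing R]

theorem isPrime_span_X_image [IsDomain R] (S : Set σ) :
    (Ideal.span ((X : σ → MvPolynomial σ R) '' S)).IsPrime := by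
  classical
  set I := Ideal.span ((X : σ → MvPolynomial σ R) '' S)
  let φ : MvPolynomial σ R →ₐ[R] MvPolynomial σ R := aeval fun s => if s ∈ S then 0 else X s
  have mk_comp_φ : (Ideal.Quotient.mkₐ R I).comp φ = Ideal.Quotient.mkₐ R I := by
    ext s
    by_cases hs : s ∈ S
    · have hX : X s ∈ I := Ideal.subset_span ⟨s, hs, rfl⟩
      simp [φ, hs, Ideal.Quotient.eq_zero_iff_mem.2 hX]
    · simp [φ, hs]
  have ker_φ : I = RingHom.ker φ := by
    refine le_antisymm (Ideal.span_le.2 ?_) fun p hp => ?_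
    · rintro _ ⟨s, hs, rfl⟩
      simp [φ, hs]
    · rw [← Ideal.Quotient.eq_zero_iff_mem, ← Ideal.Quotient.mkₐ_eq_mk R, ← mk_comp_φ,
        AlgHom.comp_apply, RingHom.mem_ker.1 hp, map_zero]
  rw [ker_φ]
  exact RingHom.ker_isPrime _

theorem X_mem_span_X_image [Nontrivial R] {S : Set σ} {s : σ} :
    (X s : MvPolynomial σ R) ∈ Ideal.span (X '' S) ↔ s ∈ S := by
  classical
  simp [mem_ideal_span_X_image, support_X, Finsupp.single_apply]

variable (R) in
/-- The ideal generated by the variables `x_e`, `e` ranging over the edges of the complement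
of `G`; for a tree `G` this is the prime `P_G`. -/
noncomputable def nonEdgeIdeal (G : SimpleGraph V) : Ideal (MvPolynomial (Sym2 V) R) :=
  Ideal.span (X '' Gᶜ.edgeSet)

variable (R V) in
/-- The ideal generated by the monomials of all cycles on the vertex set `V`. A cycle of length
`k ≥ 3` is encoded as an injective map from `Fin k`, consecutive vertices being related by
`finRotate k`. -/
noncomputable def cycleMonomialIdeal : Ideal (MvPolynomial (Sym2 V) R) :=
  Ideal.span {g | ∃ k ≥ 3, ∃ f : Fin k → V, Function.Injective f ∧
    g = ∏ a, X s(f a, f (finRotate k a))}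

/-- The graph of all pairs `{i, j}`, `i ≠ j`, whose variable is not in `P`. -/
def nonvanishingGraph (P : Ideal (MvPolynomial (Sym2 V) R)) : SimpleGraph V :=
  SimpleGraph.fromEdgeSet {e | X e ∉ P}

theorem nonvanishingGraph_adj {P : Ideal (MvPolynomial (Sym2 V) R)} {i j : V} :
    (nonvanishingGraph P).Adj i j ↔ X s(i, j) ∉ P ∧ i ≠ j :=
  SimpleGraph.fromEdgeSet_adj _

theorem nonEdgeIdeal_le_iff {G : SimpleGraph V} {P : Ideal (MvPolynomial (Sym2 V) R)} :
    nonEdgeIdeal R G ≤ P ↔ nonvanishingGraph P ≤ G := by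
  rw [nonEdgeIdeal, Ideal.span_le, Set.image_subset_iff]
  constructor
  · intro h i j hij
    rw [nonvanishingGraph_adj] at hij
    by_contra hG
    exact hij.1 (h (a := s(i, j)) ⟨hij.2, hG⟩)
  · intro h e he
    induction e with
    | _ i j =>
      by_contra hP
      exact he.2 (h (nonvanishingGraph_adj.2 ⟨hP, he.1⟩))

theorem nonvanishingGraph_nonEdgeIdeal [Nontrivial R] (G : SimpleGraph V) :
    nonvanishingGraph (nonEdgeIdeal R G) = G := by
  ext i j
  rw [nonvanishingGraph_adj, nonEdgeIdeal, X_mem_span_X_image, SimpleGraph.mem_edgeSet,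
    SimpleGraph.compl_adj]
  have := G.ne_of_adj (a := i) (b := j)
  tauto

theorem nonEdgeIdeal_injective [Nontrivial R] :
    Function.Injective (nonEdgeIdeal R : SimpleGraph V → _) :=
  Function.LeftInverse.injective nonvanishingGraph_nonEdgeIdeal

theorem nonvanishingGraph_anti {P Q : Ideal (MvPolynomial (Sym2 V) R)} (h : P ≤ Q) :
    nonvanishingGraph Q ≤ nonvanishingGraph P := by
  intro i j
  simp only [nonvanishingGraph_adj]
  exact And.imp_left (mt (@h _))

theorem ne_finRotate {k : ℕ} (hk : 2 ≤ k) (a : Fin k) : a ≠ finRotate k a := by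
  have ha : a ∈ (finRotate k).support := by simp [support_finRotate_of_le hk]
  exact (Equiv.Perm.mem_support.1 ha).symm

theorem cycleGraph_adj_iff_finRotate {k : ℕ} (hk : 2 ≤ k) {a b : Fin k} :
    (SimpleGraph.cycleGraph k).Adj a b ↔ b = finRotate k a ∨ a = finRotate k b := by
  obtain ⟨m, rfl⟩ := Nat.exists_eq_add_of_le' hk
  rw [SimpleGraph.cycleGraph_adj, finRotate_apply, finRotate_apply, sub_eq_iff_eq_add',
    sub_eq_iff_eq_add', or_comm]

theorem isAcyclic_iff_forall_exists_not_adj_finRotate {G : SimpleGraph V} :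
    G.IsAcyclic ↔ ∀ k ≥ 3, ∀ f : Fin k → V, Function.Injective f →
      ∃ a, ¬ G.Adj (f a) (f (finRotate k a)) := by
  rw [SimpleGraph.isAcyclic_iff_free_cycleGraph]
  refine forall₂_congr fun k hk => ⟨fun h f hf => ?_, ?_⟩
  · by_contra! hadj
    refine h ⟨⟨⟨f, fun {a b} hab => ?_⟩, hf⟩⟩
    rcases (cycleGraph_adj_iff_finRotate (by omega)).1 hab with rfl | rfl
    exacts [hadj a, (hadj b).symm]
  · rintro h ⟨⟨f, hf⟩⟩
    obtain ⟨a, ha⟩ := h f hf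
    exact ha (f.map_adj ((cycleGraph_adj_iff_finRotate (by omega)).2 (Or.inl rfl)))

theorem cycleMonomialIdeal_le_iff_isAcyclic (P : Ideal (MvPolynomial (Sym2 V) R)) [P.IsPrime] :
    cycleMonomialIdeal R V ≤ P ↔ (nonvanishingGraph P).IsAcyclic := by
  rw [cycleMonomialIdeal, Ideal.span_le, isAcyclic_iff_forall_exists_not_adj_finRotate]
  have mem_iff {k : ℕ} (hk : 3 ≤ k) {f : Fin k → V} (hf : Function.Injective f) :
      ∏ a, X s(f a, f (finRotate k a)) ∈ P ↔
        ∃ a, ¬ (nonvanishingGraph P).Adj (f a) (f (finRotate k a)) := by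
    simp [-finRotate_apply, Ideal.IsPrime.prod_mem_iff, nonvanishingGraph_adj, hf.eq_iff,
      ne_finRotate (show 2 ≤ k by omega)]
  constructor
  · exact fun h k hk f hf => (mem_iff hk hf).1 (h ⟨k, hk, f, hf, rfl⟩)
  · rintro h _ ⟨k, hk, f, hf, rfl⟩
    exact (mem_iff hk hf).2 (h k hk f hf)

theorem bijOn_nonEdgeIdeal_minimalPrimes [IsDomain R] [Nonempty V] :
    Set.BijOn (nonEdgeIdeal R) {T : SimpleGraph V | T.IsTree}
      (cycleMonomialIdeal R V).minimalPrimes := by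
  have isPrime (T : SimpleGraph V) : (nonEdgeIdeal R T).IsPrime := isPrime_span_X_image _
  have cycle_le {T : SimpleGraph V} (hT : T.IsTree) :
      cycleMonomialIdeal R V ≤ nonEdgeIdeal R T := by
    rw [cycleMonomialIdeal_le_iff_isAcyclic, nonvanishingGraph_nonEdgeIdeal]
    exact hT.isAcyclic
  refine ⟨fun T hT => ⟨⟨isPrime T, cycle_le hT⟩, ?_⟩, nonEdgeIdeal_injective.injOn, ?_⟩
  · rintro Q ⟨hQ, hcQ⟩ hQT
    have hle : T ≤ nonvanishingGraph Q :=
      (nonvanishingGraph_nonEdgeIdeal (R := R) T).ge.trans (nonvanishingGraph_anti hQT)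
    exact nonEdgeIdeal_le_iff.2 <| (SimpleGraph.maximal_isAcyclic_iff_isTree.2 hT).2
      ((cycleMonomialIdeal_le_iff_isAcyclic Q).1 hcQ) hle
  · rintro P ⟨⟨hP, hcP⟩, hmin⟩
    obtain ⟨T, hPT, -, hT⟩ := SimpleGraph.connected_top.exists_isTree_le_of_le_of_isAcyclic
      le_top ((cycleMonomialIdeal_le_iff_isAcyclic P).1 hcP)
    have hTP : nonEdgeIdeal R T ≤ P := nonEdgeIdeal_le_iff.2 hPT
    exact ⟨T, hT, hTP.antisymm (hmin ⟨isPrime T, cycle_le hT⟩ hTP)⟩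

end PolynomialIdeals

theorem cycleIdeal_eq_cycleMonomialIdeal (K : Type) [Field K] (n : ℕ) :
    cycleIdeal K n = cycleMonomialIdeal K (Fin n) := by
  have add_one_mod_eq {k : ℕ} (a : Fin k) (h : (a.1 + 1) % k < k) :
      (⟨(a.1 + 1) % k, h⟩ : Fin k) = finRotate k a := by
    obtain ⟨m, rfl⟩ := Nat.exists_eq_add_one.2 a.pos
    rw [finRotate_apply]
    ext
    simp [Fin.val_add]
  have le_of_injective {k : ℕ} {f : Fin k → Fin n} (hf : Function.Injective f) : k ≤ n := by
    simpa using Fintype.card_le_of_injective f hf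
  rw [cycleIdeal, cycleMonomialIdeal]
  congr 1
  ext g
  simp only [add_one_mod_eq, Set.mem_ofPred_eq, exists_prop]
  exact exists_congr fun k => and_congr_right fun _ =>
    ⟨fun h => h.2, fun h => ⟨le_of_injective h.choose_spec.1, h⟩⟩

theorem treePrime_eq_nonEdgeIdeal (K : Type) [Field K] (n : ℕ) (T : SimpleGraph (Fin n)) :
    treePrime K n T = nonEdgeIdeal K T := by
  rw [treePrime, nonEdgeIdeal]
  congr 1
  ext g
  simp [Sym2.exists, and_assoc, eq_comm]

/-! ### Counting trees -/

/-- A forest on the vertex set `β ⊕ α` in which every tree contains exactly one vertex of `β`,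
its root; it is encoded by the map sending each non-root vertex to its parent. That following
parents always ends in a root is expressed by a rank that decreases towards the root. -/
@[ext]
structure RootedForest (α β : Type*) where
  parent : α → β ⊕ α
  exists_rank : ∃ rank : α → ℕ, ∀ a b, parent a = .inr b → rank b < rank a

namespace RootedForest

variable {α β : Type*}

instance [Finite α] [Finite β] : Finite (RootedForest α β) :=
  .of_injective parent fun _ _ => RootedForest.ext

theorem wellFounded_parent (f : RootedForest α β) :
    WellFounded fun b a => f.parent a = .inr b := by
  obtain ⟨rank, hrank⟩ := f.exists_rank
  exact Subrelation.wf (fun {b a} => hrank a b) (measure rank).wf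

instance [IsEmpty α] : Unique (RootedForest α β) where
  default := ⟨isEmptyElim, isEmptyElim, isEmptyElim⟩
  uniq _ := RootedForest.ext (Subsingleton.elim _ _)

instance [Nonempty α] [IsEmpty β] : IsEmpty (RootedForest α β) where
  false f := by
    obtain ⟨a, -, ha⟩ := f.wellFounded_parent.has_min Set.univ Set.univ_nonempty
    rcases hfa : f.parent a with b | b
    exacts [isEmptyElim b, ha b trivial hfa]

section Graft

variable {p : α → Prop} [DecidablePred p]

/-- The forest in which the vertices satisfying `p` become the children of the roots, as
prescribed by `c`, while the other vertices keep their parents from `g`. -/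
def graft (c : Subtype p → β) (g : RootedForest {a // ¬ p a} (Subtype p)) : RootedForest α β where
  parent a := if h : p a then .inl (c ⟨a, h⟩) else .inr (Equiv.sumCompl p (g.parent ⟨a, h⟩))
  exists_rank := by
    obtain ⟨rank, hrank⟩ := g.exists_rank
    refine ⟨fun a => if h : p a then 0 else rank ⟨a, h⟩ + 1, fun a b hab => ?_⟩
    by_cases ha : p a
    · simp [ha] at hab
    · rcases hga : g.parent ⟨a, ha⟩ with c | c <;> simp only [ha, hga] at hab
      · obtain rfl : c.1 = b := by simpa using hab
        simp [ha, c.2]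
      · obtain rfl : c.1 = b := by simpa using hab
        simpa [ha, c.2] using hrank _ _ hga

theorem graft_parent_of_pos (c : Subtype p → β) (g : RootedForest {a // ¬ p a} (Subtype p))
    (a : Subtype p) : (graft c g).parent a = .inl (c a) :=
  dif_pos a.2

theorem graft_parent_of_neg (c : Subtype p → β) (g : RootedForest {a // ¬ p a} (Subtype p))
    (a : {a // ¬ p a}) : (graft c g).parent a = .inr (Equiv.sumCompl p (g.parent a)) :=
  dif_neg a.2

/-- The forest induced on `α` when the vertices satisfying `p` are made the roots. -/
def prune (f : RootedForest α β) (hf : ∀ a, (f.parent a).isLeft ↔ p a) :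
    RootedForest {a // ¬ p a} (Subtype p) where
  parent a := (Equiv.sumCompl p).symm ((f.parent a).getRight (by simpa using (hf a).not.2 a.2))
  exists_rank := by
    obtain ⟨rank, hrank⟩ := f.exists_rank
    refine ⟨fun a => rank a, fun a b hab => hrank a b ?_⟩
    rw [Equiv.symm_apply_eq, Sum.getRight_eq_iff] at hab
    simpa using hab

variable (p) in
/-- A forest in which `p` singles out the children of the roots is the same as an assignment of
roots to these children together with a forest having these children as its roots. -/
def graftEquiv : (Subtype p → β) × RootedForest {a // ¬ p a} (Subtype p) ≃
    {f : RootedForest α β // ∀ a, (f.parent a).isLeft ↔ p a} where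
  toFun x := ⟨graft x.1 x.2, fun a => by by_cases ha : p a <;> simp [graft, ha]⟩
  invFun f := ⟨fun a => (f.1.parent a).getLeft ((f.2 a).2 a.2), f.1.prune f.2⟩
  left_inv x := by
    ext a
    · simp [graft_parent_of_pos]
    · simp [prune, graft_parent_of_neg]
  right_inv f := by
    ext a : 3
    by_cases ha : p a
    · simp [graft, ha]
    · simp [graft, prune]

end Graft

/-- The vertices whose parent is a root. -/
def rootChildren [Fintype α] (f : RootedForest α β) : Finset α :=
  {a | (f.parent a).isLeft}

theorem card_eq_sum [Fintype α] [Finite β] :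
    Nat.card (RootedForest α β) =
      ∑ J : Finset α, Nat.card β ^ J.card * Nat.card (RootedForest {a // a ∉ J} {a // a ∈ J}) := by
  classical
  have e : RootedForest α β ≃
      Σ J : Finset α, ({a // a ∈ J} → β) × RootedForest {a // a ∉ J} {a // a ∈ J} :=
    (Equiv.sigmaFiberEquiv rootChildren).symm.trans <| Equiv.sigmaCongrRight fun J =>
      (Equiv.subtypeEquivRight fun f => by simp [rootChildren, Finset.ext_iff]).trans
        (graftEquiv (· ∈ J)).symm
  simp [Nat.card_congr e, Nat.card_sigma, Nat.card_prod, Nat.card_fun]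

section Graph

/-- The graph joining every non-root vertex to its parent. -/
def toGraph (f : RootedForest α β) : SimpleGraph (β ⊕ α) :=
  .fromEdgeSet (Set.range fun a => s(.inr a, f.parent a))

theorem toGraph_adj_parent (f : RootedForest α β) (a : α) :
    f.toGraph.Adj (.inr a) (f.parent a) :=
  (SimpleGraph.fromEdgeSet_adj _).2
    ⟨⟨a, rfl⟩, fun h => f.wellFounded_parent.irrefl.irrefl a h.symm⟩

theorem toGraph_le_iff {f : RootedForest α β} {G : SimpleGraph (β ⊕ α)} :
    f.toGraph ≤ G ↔ ∀ a, G.Adj (.inr a) (f.parent a) := by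
  refine ⟨fun h a => h (f.toGraph_adj_parent a), fun h x y hxy => ?_⟩
  obtain ⟨a, ha⟩ := ((SimpleGraph.fromEdgeSet_adj _).1 hxy).1
  rw [← SimpleGraph.mem_edgeSet, ← ha]
  exact h a

theorem toGraph_injective : Function.Injective (toGraph : RootedForest α β → _) := by
  intro f g hfg
  ext a : 2
  induction a using f.wellFounded_parent.induction with
  | _ a ih =>
    have hadj := hfg ▸ f.toGraph_adj_parent a
    obtain ⟨b, hb⟩ := ((SimpleGraph.fromEdgeSet_adj _).1 hadj).1
    rcases Sym2.eq_iff.1 hb with ⟨hba, hparent⟩ | ⟨hba, hparent⟩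
    · rw [← hparent, Sum.inr_injective hba]
    · have hcycle : f.parent b = .inr a := (ih b hba.symm).trans hparent
      exact absurd hba.symm (f.wellFounded_parent.asymmetric _ _ hcycle)

variable [Unique β]

theorem toGraph_connected (f : RootedForest α β) : f.toGraph.Connected := by
  refine SimpleGraph.connected_iff_exists_forall_reachable _ |>.2 ⟨.inl default, ?_⟩
  rintro (b | a)
  · rw [Unique.eq_default b]
  induction a using f.wellFounded_parent.induction with
  | _ a ih =>
    refine .trans ?_ (f.toGraph_adj_parent a).symm.reachable
    rcases hfa : f.parent a with b | b
    · rw [Unique.eq_default b]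
    · exact ih b hfa

theorem toGraph_isTree [Finite α] (f : RootedForest α β) : f.toGraph.IsTree := by
  rw [SimpleGraph.isTree_iff_connected_and_card]
  refine ⟨f.toGraph_connected, le_antisymm ?_ f.toGraph_connected.card_vert_le_card_edgeSet_add_one⟩
  calc Nat.card f.toGraph.edgeSet + 1
      ≤ Nat.card (Set.range fun a => s((.inr a : β ⊕ α), f.parent a)) + 1 := by
        gcongr
        refine Nat.card_mono (Set.finite_range _) ?_
        simp [toGraph]
    _ ≤ Nat.card α + 1 := by gcongr; exact Finite.card_range_le _
    _ = Nat.card (β ⊕ α) := by rw [Nat.card_sum, Nat.card_unique (α := β), add_comm]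

theorem exists_toGraph_le {G : SimpleGraph (β ⊕ α)} (hG : G.Connected) :
    ∃ f : RootedForest α β, f.toGraph ≤ G := by
  have exists_closer (a : α) : ∃ y, G.Adj (.inr a) y ∧
      G.dist y (.inl default) < G.dist (.inr a) (.inl default) := by
    obtain ⟨p, hp⟩ := hG.exists_walk_length_eq_dist (.inr a) (.inl default)
    cases p with
    | cons h q => exact ⟨_, h, by grind [SimpleGraph.dist_le q, SimpleGraph.Walk.length_cons]⟩
  choose parent hadj hdist using exists_closer
  exact ⟨⟨parent, fun a => G.dist (.inr a) (.inl default), fun a b h => by simpa [h] using hdist a⟩,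
    toGraph_le_iff.2 hadj⟩

theorem bijective_toGraph [Finite α] : Function.Bijective
    fun f : RootedForest α β => (⟨f.toGraph, f.toGraph_isTree⟩ : {T // SimpleGraph.IsTree T}) := by
  refine ⟨fun f g h => toGraph_injective (congrArg Subtype.val h), fun ⟨T, hT⟩ => ?_⟩
  obtain ⟨f, hf⟩ := exists_toGraph_le hT.connected
  have hmax := SimpleGraph.maximal_isAcyclic_iff_isTree.2 f.toGraph_isTree
  exact ⟨f, Subtype.ext (hmax.eq_of_le hT.isAcyclic hf)⟩

end Graph

end RootedForest

theorem sum_choose_mul_self_mul_pow {R : Type*} [CommSemiring R] (x y : R) (n : ℕ) :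
    (∑ j ∈ Finset.range (n + 1), n.choose j * (j * (x ^ j * y ^ (n - j)))) * (x + y) =
      n * x * (x + y) ^ n := by
  cases n with
  | zero => simp
  | succ m =>
    rw [Finset.sum_range_succ', pow_succ (x + y),
      ← mul_assoc (((m + 1 : ℕ) : R) * x), add_pow, Finset.mul_sum]
    simp only [Nat.cast_zero, zero_mul, mul_zero, add_zero, Nat.add_sub_add_right]
    congr 1
    refine Finset.sum_congr rfl fun j _ => ?_
    have h : ((m + 1 : ℕ) : R) * m.choose j = (m + 1).choose (j + 1) * (j + 1 : ℕ) := by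
      rw [← Nat.cast_mul, Nat.add_one_mul_choose_eq, Nat.cast_mul]
    calc _ = ((m + 1).choose (j + 1) * (j + 1 : ℕ)) * (x * x ^ j * y ^ (m - j)) := by ring
      _ = _ := by rw [← h]; ring

universe u in
-- The factor `a + b` avoids the truncated exponent of `F(a, b) = b (a + b) ^ (a - 1)` at `a = 0`.
theorem RootedForest.card_mul_add (α β : Type u) [Finite α] [Finite β] :
    Nat.card (RootedForest α β) * (Nat.card β + Nat.card α) =
      Nat.card β * (Nat.card β + Nat.card α) ^ Nat.card α := by
  induction hn : Nat.card α using Nat.strong_induction_on generalizing α β with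
  | _ n ih =>
  cases nonempty_fintype α
  rcases isEmpty_or_nonempty α with hα | hα
  · simp [← hn]
  have mul_card_pruned (J : Finset α) : n * Nat.card (RootedForest {a // a ∉ J} {a // a ∈ J}) =
      J.card * n ^ (n - J.card) := by
    rcases J.eq_empty_or_nonempty with rfl | hne
    · have : IsEmpty {a // a ∈ (∅ : Finset α)} := ⟨fun a => Finset.notMem_empty _ a.2⟩
      have : Nonempty {a // a ∉ (∅ : Finset α)} := hα.map fun a => ⟨a, Finset.notMem_empty a⟩
      rw [Nat.card_of_isEmpty]
      simp
    have hJn : J.card ≤ n := by simpa [← hn] using J.card_le_univ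
    have card_compl : Nat.card {a // a ∉ J} = n - J.card := by
      classical
      rw [Nat.card_eq_fintype_card, Fintype.card_subtype_compl, Fintype.card_coe, ← hn,
        Nat.card_eq_fintype_card]
    have hih := ih _ (Nat.sub_lt_of_pos_le hne.card_pos hJn) {a // a ∉ J} {a // a ∈ J} card_compl
    simpa [Nat.add_sub_cancel' hJn, mul_comm] using hih
  have mul_card_eq_sum : n * Nat.card (RootedForest α β) =
      ∑ j ∈ Finset.range (n + 1), n.choose j * (j * (Nat.card β ^ j * n ^ (n - j))) := by
    have h := Finset.sum_powerset_apply_card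
      (fun j => j * (Nat.card β ^ j * n ^ (n - j))) (x := (Finset.univ : Finset α))
    simp only [Finset.card_univ, ← Nat.card_eq_fintype_card, hn, Finset.powerset_univ,
      smul_eq_mul] at h
    rw [card_eq_sum, Finset.mul_sum, ← h]
    exact Finset.sum_congr rfl fun J _ => by rw [mul_left_comm, mul_card_pruned, mul_left_comm]
  have hpos : 0 < n := hn ▸ Nat.card_pos
  apply Nat.eq_of_mul_eq_mul_left hpos
  rw [← mul_assoc, mul_card_eq_sum, ← mul_assoc]
  simpa using sum_choose_mul_self_mul_pow (Nat.card β) n n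

theorem card_isTree (V : Type*) [Finite V] [Nonempty V] :
    Nat.card {T : SimpleGraph V // T.IsTree} = Nat.card V ^ (Nat.card V - 2) := by
  obtain ⟨m, hm⟩ : ∃ m, Nat.card V = m + 1 := Nat.exists_eq_add_one.2 Nat.card_pos
  have e : V ≃ Unit ⊕ Fin m := (Finite.card_eq.1 (by simp [hm, add_comm])).some
  have hcard : Nat.card {T : SimpleGraph V // T.IsTree} = Nat.card (RootedForest (Fin m) Unit) :=
    Nat.card_congr <| (e.simpleGraph.subtypeEquiv fun T =>
      (SimpleGraph.Iso.comap e.symm T).symm.isTree_iff).trans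
        (Equiv.ofBijective _ RootedForest.bijective_toGraph).symm
  have hforest := RootedForest.card_mul_add (Fin m) Unit
  rw [hcard, hm]
  cases m with
  | zero => simp
  | succ m =>
    refine Nat.eq_of_mul_eq_mul_right (Nat.succ_pos (m + 1)) ?_
    simpa [pow_succ, Nat.add_comm 1] using hforest

theorem minimal_primes_of_cycle_ideal_are_trees_general {R V : Type*} [CommRing R] [IsDomain R]
    [Nonempty V] :
    Set.BijOn (nonEdgeIdeal R) {T : SimpleGraph V | T.IsTree}
      (cycleMonomialIdeal R V).minimalPrimes ∧
    (Finite V → Nat.card (cycleMonomialIdeal R V).minimalPrimes =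
      Nat.card V ^ (Nat.card V - 2)) := by
  refine ⟨bijOn_nonEdgeIdeal_minimalPrimes, fun _ => ?_⟩
  rw [← card_isTree V]
  exact Nat.card_congr (bijOn_nonEdgeIdeal_minimalPrimes.equiv _).symm

/-- The minimal primes over the ideal of cycle monomials correspond bijectively, via
`T ↦ P_T`, to trees on the vertex set `[n]`; in particular there are `n^{n-2}` of them. -/
theorem minimal_primes_of_cycle_ideal_are_trees
    (K : Type) [Field K] (n : ℕ) (hn : 2 ≤ n) :
    (∀ T : SimpleGraph (Fin n), T.IsTree → treePrime K n T ∈ (cycleIdeal K n).minimalPrimes) ∧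
    (∀ T T' : SimpleGraph (Fin n), T.IsTree → T'.IsTree →
      treePrime K n T = treePrime K n T' → T = T') ∧
    (∀ P ∈ (cycleIdeal K n).minimalPrimes,
      ∃ T : SimpleGraph (Fin n), T.IsTree ∧ treePrime K n T = P) ∧
    Nat.card {P : Ideal (MvPolynomial (Sym2 (Fin n)) K) //
        P ∈ (cycleIdeal K n).minimalPrimes} = n ^ (n - 2) := by
  have : NeZero n := ⟨by omega⟩
  obtain ⟨⟨mapsTo, injOn, surjOn⟩, card⟩ :=
    minimal_primes_of_cycle_ideal_are_trees_general (R := K) (V := Fin n)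
  simp only [cycleIdeal_eq_cycleMonomialIdeal, treePrime_eq_nonEdgeIdeal]
  exact ⟨fun T hT => mapsTo hT, fun T T' hT hT' => injOn hT hT', fun P hP => surjOn hP,
    (card inferInstance).trans (by simp)⟩
end

section
/- For every n ∈ ℕ, the number of orbits of Sym([n]), acting by simultaneous row and column permutations (π·A)(i,j) = A(π⁻¹(i),π⁻¹(j)), on the set of symmetric n×n matrices over ℚ all of whose entries lie in {0,1} and whose rank equals exactly 2, is 2·⌊n/2⌋·⌈n/2⌉ + n(n−1)/2. -/
/-!
A symmetric matrix of rank `r` over a field is `X P Xᵀ` for a nonsingular principal `r × r`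
submatrix `P`. If `r = 2` and all entries are `0` or `1`, then up to conjugation by a permutation
`P` is one of `!![1, 0; 0, 1]`, `!![0, 1; 1, 0]`, `!![1, 1; 1, 0]`, and, as `2 ≠ 0`, the diagonal
of `X P Xᵀ` forces every row of `X` to be a standard basis vector or zero. So the matrix arises
from `P` by repeating rows and columns and adding zeros, and its orbit is determined by `P` and
the multiplicities of the two rows of `P`, up to the swap of the rows when that fixes `P`.
-/

open Equiv Matrix

variable {ι κ K : Type*}

section Labellings

/-- The number of indices to which a partial labelling `f` of `ι` gives the label `c`; the indices
with `f i = none` carry no label. -/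
noncomputable def classSize (f : ι → Option κ) (c : κ) : ℕ :=
  Nat.card {i // f i = some c}

theorem exists_perm_comp_eq_iff [Finite ι] {f g : ι → κ} :
    (∃ π : Perm ι, g ∘ π = f) ↔ ∀ c, Nat.card {i // f i = c} = Nat.card {i // g i = c} := by
  constructor
  · rintro ⟨π, rfl⟩ c
    exact Nat.card_congr (π.subtypeEquiv fun _ => Iff.rfl)
  · intro h
    have e (c : κ) : {i // f i = c} ≃ {i // g i = c} := (Finite.card_eq.1 (h c)).some
    exact ⟨ofFiberEquiv e, funext (ofFiberEquiv_map e)⟩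

theorem exists_card_fiber_eq [Finite ι] [Fintype κ] {m : κ → ℕ} (hm : ∑ c, m c = Nat.card ι) :
    ∃ f : ι → κ, ∀ c, Nat.card {i // f i = c} = m c := by
  have hcard : Nat.card ι = Nat.card (Σ c, Fin (m c)) := by simp [← hm]
  obtain ⟨e⟩ := Finite.card_eq.1 hcard
  refine ⟨fun i => (e i).1, fun c => ?_⟩
  rw [Nat.card_congr (e.subtypeEquiv (q := fun x => x.1 = c) fun _ => Iff.rfl),
    Nat.card_congr (sigmaSubtype c), Nat.card_fin]

theorem card_none_add_sum_classSize [Finite ι] [Fintype κ] (f : ι → Option κ) :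
    Nat.card {i // f i = none} + ∑ c, classSize f c = Nat.card ι := by
  rw [← Nat.card_congr (sigmaFiberEquiv f), Nat.card_sigma, Fintype.sum_option]
  rfl

theorem sum_classSize_le [Finite ι] [Fintype κ] (f : ι → Option κ) :
    ∑ c, classSize f c ≤ Nat.card ι :=
  card_none_add_sum_classSize f ▸ Nat.le_add_left _ _

theorem exists_classSize_eq [Finite ι] [Fintype κ] {m : κ → ℕ} (hm : ∑ c, m c ≤ Nat.card ι) :
    ∃ f : ι → Option κ, classSize f = m := by
  obtain ⟨f, hf⟩ := exists_card_fiber_eq (ι := ι) (κ := Option κ)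
    (m := fun o => o.elim (Nat.card ι - ∑ c, m c) m) (by simp [Fintype.sum_option, hm])
  exact ⟨f, funext fun c => hf (some c)⟩

theorem classSize_pos_iff [Finite ι] {f : ι → Option κ} {c : κ} :
    0 < classSize f c ↔ ∃ i, f i = some c := by
  rw [classSize, Finite.card_pos_iff, nonempty_subtype]

theorem classSize_comp_perm (f : ι → Option κ) (π : Perm ι) :
    classSize (f ∘ π) = classSize f :=
  funext fun _ => Nat.card_congr (π.subtypeEquiv fun _ => Iff.rfl)

theorem classSize_map_perm (f : ι → Option κ) (σ : Perm κ) :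
    classSize (Option.map σ ∘ f) = classSize f ∘ σ.symm := by
  ext c
  obtain ⟨d, rfl⟩ := σ.surjective c
  simp [classSize]

theorem exists_perm_comp_eq_of_classSize_eq [Finite ι] [Finite κ] {f g : ι → Option κ}
    (h : classSize f = classSize g) : ∃ π : Perm ι, g ∘ π = f := by
  have := Fintype.ofFinite κ
  have hf := card_none_add_sum_classSize f
  have hg := card_none_add_sum_classSize g
  rw [exists_perm_comp_eq_iff]
  rintro (_ | c)
  · rw [h] at hf
    omega
  · exact congrFun h c

end Labellings

section BlowUp

/-- The matrix obtained from `P` by using row and column `c` of `P` at every index labelled `c`,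
and a zero row and column at every unlabelled index. -/
def blowUp [Zero K] (P : Matrix κ κ K) (f : ι → Option κ) : Matrix ι ι K :=
  of fun i j => (f i).elim 0 fun c => (f j).elim 0 (P c)

/-- The `0`-`1` matrix of a partial labelling: row `i` is the standard basis vector at `f i`, or
zero if `i` is unlabelled. -/
def labelMatrix (K : Type*) [Zero K] [One K] [DecidableEq κ] (f : ι → Option κ) : Matrix ι κ K :=
  of fun i => (f i).elim 0 fun c => Pi.single c 1

/-- Two matrices are permutation similar if they lie in the same orbit under simultaneous row and
column permutations. -/
def PermSimilar (A B : Matrix ι ι K) : Prop :=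
  ∃ π : Perm ι, A.submatrix ⇑π⁻¹ ⇑π⁻¹ = B

theorem blowUp_apply_some [Zero K] (P : Matrix κ κ K) {f : ι → Option κ} {i j : ι} {c d : κ}
    (hi : f i = some c) (hj : f j = some d) : blowUp P f i j = P c d := by
  simp [blowUp, hi, hj]

theorem blowUp_eq_labelMatrix_mul [Semiring K] [Fintype κ] [DecidableEq κ] (P : Matrix κ κ K)
    (f : ι → Option κ) : blowUp P f = labelMatrix K f * P * (labelMatrix K f)ᵀ := by
  ext i j
  have hrow (i : ι) : labelMatrix K f i = (f i).elim 0 fun c => Pi.single c 1 := rfl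
  rw [mul_apply_eq_vecMul, mul_apply_eq_vecMul]
  rcases hi : f i with _ | c <;> rcases hj : f j with _ | d <;>
    simp [blowUp, hrow, hi, hj, vecMul]

theorem blowUp_submatrix_perm [Zero K] (P : Matrix κ κ K) (σ : Perm κ) (f : ι → Option κ) :
    blowUp (P.submatrix σ σ) f = blowUp P (Option.map σ ∘ f) := by
  ext i j
  rcases hi : f i with _ | c <;> rcases hj : f j with _ | d <;> simp [blowUp, hi, hj]

theorem isSymm_blowUp [Zero K] {P : Matrix κ κ K} (hP : P.IsSymm) (f : ι → Option κ) :
    (blowUp P f).IsSymm := by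
  ext i j
  rcases hi : f i with _ | c <;> rcases hj : f j with _ | d <;> simp [blowUp, hi, hj, hP.apply]

theorem blowUp_apply_eq_zero_or_one [Zero K] [One K] {P : Matrix κ κ K}
    (hP : ∀ c d, P c d = 0 ∨ P c d = 1) (f : ι → Option κ) (i j : ι) :
    blowUp P f i j = 0 ∨ blowUp P f i j = 1 := by
  rcases hi : f i with _ | c <;> rcases hj : f j with _ | d <;> simp [blowUp, hi, hj, hP]

variable [Fintype κ] [DecidableEq κ] [Field K]

theorem rank_blowUp [Fintype ι] {P : Matrix κ κ K} (hP : IsUnit P) {f : ι → Option κ}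
    (hf : ∀ c, ∃ i, f i = some c) : (blowUp P f).rank = Fintype.card κ := by
  choose s hs using hf
  apply le_antisymm
  · rw [blowUp_eq_labelMatrix_mul, Matrix.mul_assoc]
    exact (rank_mul_le_left _ _).trans (rank_le_card_width _)
  · have hsub : (blowUp P f).submatrix s s = P := by
      ext c d
      exact blowUp_apply_some P (hs c) (hs d)
    calc Fintype.card κ = ((blowUp P f).submatrix s s).rank := by rw [hsub, rank_of_isUnit P hP]
      _ ≤ (blowUp P f).rank := rank_submatrix_le _ _ _

theorem blowUp_row_eq_iff {P : Matrix κ κ K} (hP : IsUnit P) {f : ι → Option κ}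
    (hf : ∀ c, ∃ i, f i = some c) {i j : ι} : blowUp P f i = blowUp P f j ↔ f i = f j := by
  have hrows := linearIndependent_rows_of_isUnit hP
  refine ⟨fun h => ?_, fun h => by ext; simp [blowUp, h]⟩
  choose s hs using hf
  have hd (d : κ) := congrFun h (s d)
  rcases hi : f i with _ | c <;> rcases hj : f j with _ | c' <;>
    simp only [blowUp, of_apply, hi, hj, hs, Option.elim_none, Option.elim_some] at hd
  · rfl
  · exact absurd (funext fun d => (hd d).symm) (hrows.ne_zero c')
  · exact absurd (funext hd) (hrows.ne_zero c)
  · exact congrArg some (hrows.injective (funext hd))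

theorem blowUp_row_eq_zero_iff {P : Matrix κ κ K} (hP : IsUnit P) {f : ι → Option κ}
    (hf : ∀ c, ∃ i, f i = some c) {i : ι} : blowUp P f i = 0 ↔ f i = none := by
  refine ⟨fun h => ?_, fun h => by ext; simp [blowUp, h]⟩
  choose s hs using hf
  rcases hi : f i with _ | c
  · rfl
  · refine absurd (funext fun d => ?_) ((linearIndependent_rows_of_isUnit hP).ne_zero c)
    simpa [blowUp, hi, hs] using congrFun h (s d)

/- The labels are recovered from the matrix: two indices share a label iff their rows agree, and
an index is unlabelled iff its row vanishes. -/
theorem exists_perm_of_blowUp_eq {P Q : Matrix κ κ K} (hP : IsUnit P) (hQ : IsUnit Q)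
    {f g : ι → Option κ} (hf : ∀ c, ∃ i, f i = some c) (hg : ∀ c, ∃ i, g i = some c)
    (h : blowUp P f = blowUp Q g) :
    ∃ σ : Perm κ, P = Q.submatrix σ σ ∧ g = Option.map σ ∘ f := by
  have hker (i j : ι) : f i = f j ↔ g i = g j := by
    rw [← blowUp_row_eq_iff hP hf, h, blowUp_row_eq_iff hQ hg]
  have hnone (i : ι) : f i = none ↔ g i = none := by
    rw [← blowUp_row_eq_zero_iff hP hf, h, blowUp_row_eq_zero_iff hQ hg]
  choose s hs using hf
  have hgs (c : κ) : ∃ d, g (s c) = some d :=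
    Option.ne_none_iff_exists'.1 fun hc => by simpa [hs] using (hnone _).2 hc
  choose σ hσ using hgs
  have hσ_inj : Function.Injective σ := fun c d hcd => by
    have hsc : f (s c) = f (s d) := (hker _ _).2 (by rw [hσ, hσ, hcd])
    simpa [hs] using hsc
  refine ⟨.ofBijective σ (Finite.injective_iff_bijective.1 hσ_inj), ?_, funext fun i => ?_⟩
  · ext c d
    rw [← blowUp_apply_some P (hs c) (hs d), h, blowUp_apply_some Q (hσ c) (hσ d)]
    rfl
  · rcases hi : f i with _ | c
    · rw [Function.comp_apply, hi, (hnone i).1 hi, Option.map_none]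
    · rw [Function.comp_apply, hi, (hker i (s c)).1 (hi.trans (hs c).symm), hσ, Option.map_some]
      rfl

theorem permSimilar_blowUp_iff [Finite ι] {P Q : Matrix κ κ K} (hP : IsUnit P) (hQ : IsUnit Q)
    {f g : ι → Option κ} (hf : ∀ c, 0 < classSize f c) (hg : ∀ c, 0 < classSize g c) :
    PermSimilar (blowUp P f) (blowUp Q g) ↔
      ∃ σ : Perm κ, P = Q.submatrix σ σ ∧ ∀ c, classSize f c = classSize g (σ c) := by
  constructor
  · rintro ⟨π, hπ⟩
    obtain ⟨σ, hPQ, rfl⟩ := exists_perm_of_blowUp_eq hP hQ (f := f ∘ ⇑π⁻¹)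
      (fun c => classSize_pos_iff.1 (by rw [classSize_comp_perm]; exact hf c))
      (fun c => classSize_pos_iff.1 (hg c)) hπ
    exact ⟨σ, hPQ, fun c => by simp [classSize_map_perm, classSize_comp_perm]⟩
  · rintro ⟨σ, rfl, hsize⟩
    have hsize' : classSize g = classSize (Option.map σ ∘ f) := by
      ext c
      simp [classSize_map_perm, hsize]
    obtain ⟨π, rfl⟩ := exists_perm_comp_eq_of_classSize_eq hsize'
    exact ⟨π⁻¹, by rw [blowUp_submatrix_perm, inv_inv]; rfl⟩

end BlowUp

section PrincipalSubmatrix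

variable [Field K]

theorem exists_linearIndependent_row_and_eq_mul [Finite ι] [Fintype κ] {A : Matrix ι κ K}
    {r : ℕ} (hr : A.rank = r) :
    ∃ (s : Fin r → ι) (X : Matrix ι (Fin r) K),
      LinearIndependent K (A.submatrix s id).row ∧ A = X * A.submatrix s id := by
  rw [rank_eq_finrank_span_row] at hr
  subst hr
  obtain ⟨v, hv_row, hv_span, hv_indep⟩ :=
    Submodule.exists_fun_fin_finrank_span_eq K (Set.range A.row)
  choose s hs using hv_row
  obtain rfl : (A.submatrix s id).row = v := funext hs
  have hmem (i : ι) : A.row i ∈ Submodule.span K (Set.range (A.submatrix s id).row) := by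
    rw [hv_span]
    exact Submodule.subset_span ⟨i, rfl⟩
  choose X hX using fun i => (Submodule.mem_span_range_iff_exists_fun K).1 (hmem i)
  refine ⟨s, of X, hv_indep, ?_⟩
  ext i j
  simpa [mul_apply] using (congrFun (hX i) j).symm

theorem exists_isUnit_principal_submatrix [Fintype ι] {A : Matrix ι ι K} (hA : A.IsSymm) {r : ℕ}
    (hr : A.rank = r) :
    ∃ (s : Fin r → ι) (X : Matrix ι (Fin r) K), IsUnit (A.submatrix s s) ∧
      X.submatrix s id = 1 ∧ A = X * A.submatrix s s * Xᵀ := by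
  obtain ⟨s, X, hs, hX⟩ := exists_linearIndependent_row_and_eq_mul hr
  have hcols : A.submatrix id s = X * A.submatrix s s := congrArg (submatrix · id s) hX
  have hrows : A.submatrix s id = A.submatrix s s * Xᵀ := by
    simpa [hA.eq] using congrArg transpose hcols
  have hunit : IsUnit (A.submatrix s s) := by
    rw [← vecMul_injective_iff, hrows] at hs
    rw [← vecMul_injective_iff_isUnit]
    refine Function.Injective.of_comp (f := (· ᵥ* Xᵀ)) ?_
    simpa [Function.comp_def] using hs
  have hsX : X.submatrix s id * A.submatrix s s = A.submatrix s s :=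
    (congrArg (submatrix · s id) hcols).symm
  refine ⟨s, X, hunit, hunit.mul_right_cancel (hsX.trans (one_mul _).symm), ?_⟩
  rw [Matrix.mul_assoc, ← hrows, ← hX]

end PrincipalSubmatrix

section ZeroOne

/-- Up to simultaneous permutation, the nonsingular symmetric `2 × 2` matrices with entries in
`{0, 1}`. Their blow-ups are the adjacency matrices of two disjoint looped cliques, of a complete
bipartite graph, and of a looped clique completely joined to an independent set. -/
inductive CoreShape
  | twoCliques
  | bipartite
  | split
  deriving DecidableEq

/-- The matrix of a core shape; for `split`, label `0` is the looped clique. -/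
def CoreShape.core (K : Type*) [Zero K] [One K] : CoreShape → Matrix (Fin 2) (Fin 2) K
  | twoCliques => !![1, 0; 0, 1]
  | bipartite => !![0, 1; 1, 0]
  | split => !![1, 1; 1, 0]

open CoreShape

theorem perm_fin_two_eq_one_or_swap : ∀ σ : Perm (Fin 2), σ = 1 ∨ σ = swap 0 1 := by
  decide

namespace CoreShape

theorem isSymm_core [Zero K] [One K] (t : CoreShape) : (t.core K).IsSymm := by
  ext c d
  cases t <;> fin_cases c <;> fin_cases d <;> rfl

theorem core_apply_eq_zero_or_one [Zero K] [One K] (t : CoreShape) (c d : Fin 2) :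
    t.core K c d = 0 ∨ t.core K c d = 1 := by
  cases t <;> fin_cases c <;> fin_cases d <;> simp [core]

theorem isUnit_core [CommRing K] (t : CoreShape) : IsUnit (t.core K) := by
  rw [isUnit_iff_isUnit_det]
  cases t <;> simp [core]

theorem core_eq_core_submatrix_iff [Zero K] [One K] [NeZero (1 : K)] {t u : CoreShape}
    {σ : Perm (Fin 2)} : t.core K = (u.core K).submatrix σ σ ↔ t = u ∧ (t = split → σ = 1) := by
  have hne : swap (0 : Fin 2) 1 ≠ 1 := by decide
  rcases perm_fin_two_eq_one_or_swap σ with rfl | rfl <;> cases t <;> cases u <;>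
    simp [core, ← Matrix.ext_iff, hne]

end CoreShape

variable [Field K]

theorem exists_core_submatrix_eq {P : Matrix (Fin 2) (Fin 2) K} (hP : P.IsSymm)
    (h01 : ∀ c d, P c d = 0 ∨ P c d = 1) (hunit : IsUnit P) :
    ∃ (t : CoreShape) (σ : Perm (Fin 2)), P = (t.core K).submatrix σ σ := by
  rw [isUnit_iff_isUnit_det, isUnit_iff_ne_zero, det_fin_two, hP.apply 0 1] at hunit
  have h10 : P 1 0 = P 0 1 := hP.apply 0 1
  rcases h01 0 0 with h | h <;> rcases h01 0 1 with h' | h' <;> rcases h01 1 1 with h'' | h'' <;>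
    simp only [h, h', h'', mul_zero, mul_one, sub_self, ne_eq, not_true_eq_false]
      at hunit
  · exact ⟨bipartite, 1, by simp [core, ← Matrix.ext_iff, h, h', h'', h10]⟩
  · exact ⟨split, swap 0 1, by simp [core, ← Matrix.ext_iff, h, h', h'', h10]⟩
  · exact ⟨twoCliques, 1, by simp [core, ← Matrix.ext_iff, h, h', h'', h10]⟩
  · exact ⟨split, 1, by simp [core, ← Matrix.ext_iff, h, h', h'', h10]⟩

theorem exists_core_submatrix_eq_and_le {P : Matrix (Fin 2) (Fin 2) K} (hP : P.IsSymm)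
    (h01 : ∀ c d, P c d = 0 ∨ P c d = 1) (hunit : IsUnit P) (m : Fin 2 → ℕ) :
    ∃ (t : CoreShape) (σ : Perm (Fin 2)), P = (t.core K).submatrix σ σ ∧
      (t ≠ split → m (σ.symm 0) ≤ m (σ.symm 1)) := by
  obtain ⟨t, σ, rfl⟩ := exists_core_submatrix_eq hP h01 hunit
  by_cases hle : t ≠ split → m (σ.symm 0) ≤ m (σ.symm 1)
  · exact ⟨t, σ, rfl, hle⟩
  · obtain ⟨ht, hlt⟩ := Classical.not_imp.1 hle
    have hswap : t.core K = (t.core K).submatrix (swap 0 1) (swap 0 1) :=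
      core_eq_core_submatrix_iff.2 ⟨rfl, fun h => absurd h ht⟩
    refine ⟨t, σ.trans (swap 0 1), congrArg (submatrix · σ σ) hswap, fun _ => ?_⟩
    simpa using (not_le.1 hlt).le

theorem exists_eq_single_of_zeroOne [NeZero (2 : K)] {P : Matrix (Fin 2) (Fin 2) K}
    (hP : P.IsSymm) (h01 : ∀ c d, P c d = 0 ∨ P c d = 1) (hunit : IsUnit P) {x : Fin 2 → K}
    (hxP : ∀ c, (x ᵥ* P) c = 0 ∨ (x ᵥ* P) c = 1)
    (hxPx : x ᵥ* P ⬝ᵥ x = 0 ∨ x ᵥ* P ⬝ᵥ x = 1) :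
    ∃ o : Option (Fin 2), x = o.elim 0 fun c => Pi.single c 1 := by
  rw [isUnit_iff_isUnit_det, isUnit_iff_ne_zero, det_fin_two, hP.apply 0 1] at hunit
  have h10 : P 1 0 = P 0 1 := hP.apply 0 1
  have h2 : (2 : K) ≠ 0 := two_ne_zero
  have hx0 := hxP 0
  have hx1 := hxP 1
  simp only [vecMul, dotProduct, Fin.sum_univ_two, h10] at hx0 hx1 hxPx
  have hx : (x 0 = 0 ∧ x 1 = 0) ∨ (x 0 = 1 ∧ x 1 = 0) ∨ (x 0 = 0 ∧ x 1 = 1) := by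
    have := h01 0 0
    have := h01 0 1
    have := h01 1 1
    -- Otherwise `x ᵥ* P` is the nonzero `0`-`1` vector that is not a row of `P`, and
    -- `x ᵥ* P ⬝ᵥ x` is `2` or `-1`.
    grind
  rcases hx with ⟨h0, h1⟩ | ⟨h0, h1⟩ | ⟨h0, h1⟩
  · exact ⟨none, by ext c; fin_cases c <;> simp [h0, h1]⟩
  · exact ⟨some 0, by ext c; fin_cases c <;> simp [h0, h1]⟩
  · exact ⟨some 1, by ext c; fin_cases c <;> simp [h0, h1]⟩

theorem exists_eq_blowUp [Fintype ι] [NeZero (2 : K)] {A : Matrix ι ι K} (hA : A.IsSymm)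
    (h01 : ∀ i j, A i j = 0 ∨ A i j = 1) (hr : A.rank = 2) :
    ∃ (P : Matrix (Fin 2) (Fin 2) K) (f : ι → Option (Fin 2)), P.IsSymm ∧
      (∀ c d, P c d = 0 ∨ P c d = 1) ∧ IsUnit P ∧ (∀ c, ∃ i, f i = some c) ∧ A = blowUp P f := by
  obtain ⟨s, X, hunit, hXs, hX⟩ := exists_isUnit_principal_submatrix hA hr
  set P := A.submatrix s s
  have hcols : A.submatrix id s = X * P := by
    calc A.submatrix id s = X * P * (X.submatrix s id)ᵀ := congrArg (submatrix · id s) hX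
      _ = X * P := by rw [hXs, transpose_one, Matrix.mul_one]
  have hlabel (i : ι) : ∃ o : Option (Fin 2), X i = o.elim 0 fun c => Pi.single c 1 := by
    refine exists_eq_single_of_zeroOne (hA.submatrix s) (fun _ _ => h01 _ _) hunit
      (fun c => ?_) ?_
    · have hic : A i (s c) = (X i ᵥ* P) c := congrFun (congrFun hcols i) c
      exact hic ▸ h01 i (s c)
    · have hii : A i i = X i ᵥ* P ⬝ᵥ X i := congrFun (congrFun hX i) i
      exact hii ▸ h01 i i
  choose f hf using hlabel
  have hX_eq : X = labelMatrix K f := funext hf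
  refine ⟨P, f, hA.submatrix s, fun _ _ => h01 _ _, hunit, fun c => ⟨s c, ?_⟩, ?_⟩
  · have hone : X (s c) c = 1 := by simpa using congrFun (congrFun hXs c) c
    rw [hf] at hone
    rcases hsc : f (s c) with _ | d
    · simp [hsc] at hone
    · rw [hsc, Option.elim_some, Pi.single_apply] at hone
      simpa [eq_comm] using hone
  · rw [blowUp_eq_labelMatrix_mul, ← hX_eq, ← hX]

theorem exists_eq_blowUp_core [Fintype ι] [NeZero (2 : K)] {A : Matrix ι ι K} (hA : A.IsSymm)
    (h01 : ∀ i j, A i j = 0 ∨ A i j = 1) (hr : A.rank = 2) :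
    ∃ (t : CoreShape) (f : ι → Option (Fin 2)), (∀ c, 0 < classSize f c) ∧
      (t ≠ split → classSize f 0 ≤ classSize f 1) ∧ A = blowUp (t.core K) f := by
  obtain ⟨P, g, hP, hP01, hunit, hg, rfl⟩ := exists_eq_blowUp hA h01 hr
  obtain ⟨t, σ, rfl, hle⟩ := exists_core_submatrix_eq_and_le hP hP01 hunit (classSize g)
  refine ⟨t, Option.map σ ∘ g, fun c => ?_, fun ht => ?_, blowUp_submatrix_perm _ σ g⟩
  · rw [classSize_map_perm]
    exact classSize_pos_iff.2 (hg _)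
  · rw [classSize_map_perm]
    exact hle ht

end ZeroOne

section OrbitParams

open CoreShape

/-- The possible numbers of indices with label `0` among `m` labelled indices, both labels being
used. For a core fixed by the swap of the labels, only the smaller class counts. -/
def CoreShape.firstClassSizes : CoreShape → ℕ → Finset ℕ
  | split, m => Finset.Ioo 0 m
  | _, m => Finset.Ioc 0 (m / 2)

/-- The parameters `⟨t, m, a⟩` of the orbits of rank `2` matrices of size `n`: the core shape, the
number of nonzero rows, and the number of rows with label `0`. -/
def orbitParams (n : ℕ) : Finset ((_ : CoreShape) × (_ : ℕ) × ℕ) :=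
  ({twoCliques, bipartite, split} : Finset CoreShape).sigma fun t =>
    (Finset.range (n + 1)).sigma t.firstClassSizes

theorem mem_orbitParams {n m a : ℕ} {t : CoreShape} :
    ⟨t, m, a⟩ ∈ orbitParams n ↔ m ≤ n ∧ 0 < a ∧ a < m ∧ (t ≠ split → 2 * a ≤ m) := by
  cases t <;> simp [orbitParams, firstClassSizes] <;> omega

theorem sum_range_succ_div_two (n : ℕ) :
    ∑ m ∈ Finset.range (n + 1), m / 2 = n / 2 * ((n + 1) / 2) := by
  induction n with
  | zero => rfl
  | succ n ih =>
    rw [Finset.sum_range_succ, ih, show (n + 1 + 1) / 2 = n / 2 + 1 from n.add_div_right two_pos]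
    ring

theorem card_orbitParams (n : ℕ) :
    (orbitParams n).card = 2 * (n / 2) * ((n + 1) / 2) + n * (n - 1) / 2 := by
  have hsum : ∑ m ∈ Finset.range (n + 1), (m - 1) = n * (n - 1) / 2 := by
    rw [Finset.sum_range_succ', ← Finset.sum_range_id]
    simp
  simp only [orbitParams, Finset.card_sigma, firstClassSizes, Nat.card_Ioc, Nat.card_Ioo,
    Finset.mem_insert, Finset.mem_singleton, reduceCtorEq, or_self, not_false_eq_true,
    Finset.sum_insert, Finset.sum_singleton, Nat.sub_zero, sum_range_succ_div_two, hsum]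
  ring

/-- `A` is a blow-up of the core `p.1` with `p.2.1` labelled indices, `p.2.2` of them with
label `0`. -/
def HasParams [Zero K] [One K] (A : Matrix ι ι K) (p : (_ : CoreShape) × (_ : ℕ) × ℕ) : Prop :=
  ∃ f : ι → Option (Fin 2), classSize f = ![p.2.2, p.2.1 - p.2.2] ∧ A = blowUp (p.1.core K) f

variable [Field K]

theorem HasParams.permSimilar_iff [Finite ι] {n : ℕ} {A B : Matrix ι ι K}
    {p q : (_ : CoreShape) × (_ : ℕ) × ℕ} (hp : p ∈ orbitParams n) (hq : q ∈ orbitParams n)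
    (hA : HasParams A p) (hB : HasParams B q) : PermSimilar A B ↔ p = q := by
  obtain ⟨t, m, a⟩ := p
  obtain ⟨u, l, b⟩ := q
  obtain ⟨-, ha_pos, ha_lt, ha_le⟩ := mem_orbitParams.1 hp
  obtain ⟨-, hb_pos, hb_lt, hb_le⟩ := mem_orbitParams.1 hq
  obtain ⟨f, hf, rfl⟩ := hA
  obtain ⟨g, hg, rfl⟩ := hB
  rw [permSimilar_blowUp_iff (isUnit_core t) (isUnit_core u)
    (by simp [hf, Fin.forall_fin_two, ha_pos, ha_lt])
    (by simp [hg, Fin.forall_fin_two, hb_pos, hb_lt])]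
  simp only [core_eq_core_submatrix_iff, hf, hg, Fin.forall_fin_two]
  constructor
  · rintro ⟨σ, ⟨rfl, hσ⟩, hsize⟩
    obtain ⟨rfl, rfl⟩ : m = l ∧ a = b := by
      rcases perm_fin_two_eq_one_or_swap σ with rfl | rfl
      · simp only [Perm.one_apply, cons_val_zero, cons_val_one] at hsize
        omega
      · have ht : t ≠ split := fun ht => absurd (hσ ht) (by decide)
        have := ha_le ht
        have := hb_le ht
        simp only [swap_apply_left, swap_apply_right, cons_val_zero, cons_val_one] at hsize
        omega
    rfl
  · rintro ⟨⟩
    exact ⟨1, ⟨rfl, fun _ => rfl⟩, rfl, rfl⟩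

theorem exists_hasParams_of_rank_eq_two [Fintype ι] [NeZero (2 : K)] {A : Matrix ι ι K}
    (hA : A.IsSymm) (h01 : ∀ i j, A i j = 0 ∨ A i j = 1) (hr : A.rank = 2) :
    ∃ p ∈ orbitParams (Fintype.card ι), HasParams A p := by
  obtain ⟨t, f, hpos, hle, rfl⟩ := exists_eq_blowUp_core hA h01 hr
  have hcard : classSize f 0 + classSize f 1 ≤ Fintype.card ι := by
    simpa using sum_classSize_le f
  refine ⟨⟨t, classSize f 0 + classSize f 1, classSize f 0⟩, mem_orbitParams.2 ?_, f, ?_, rfl⟩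
  · refine ⟨hcard, hpos 0, Nat.lt_add_of_pos_right (hpos 1), fun ht => ?_⟩
    calc 2 * classSize f 0 = classSize f 0 + classSize f 0 := two_mul _
      _ ≤ classSize f 0 + classSize f 1 := Nat.add_le_add_left (hle ht) _
  · ext c
    fin_cases c <;> simp

theorem exists_rank_eq_two_hasParams (K : Type*) [Field K] [Fintype ι]
    {p : (_ : CoreShape) × (_ : ℕ) × ℕ} (hp : p ∈ orbitParams (Fintype.card ι)) :
    ∃ A : Matrix ι ι K, (A.IsSymm ∧ (∀ i j, A i j = 0 ∨ A i j = 1) ∧ A.rank = 2) ∧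
      HasParams A p := by
  obtain ⟨t, m, a⟩ := p
  obtain ⟨hm, ha_pos, ha_lt, -⟩ := mem_orbitParams.1 hp
  obtain ⟨f, hf⟩ := exists_classSize_eq (ι := ι) (m := ![a, m - a])
    (by simp [Nat.add_sub_cancel' ha_lt.le, hm])
  have hf_surj (c : Fin 2) : ∃ i, f i = some c := by
    rw [← classSize_pos_iff, hf]
    fin_cases c <;> simp [ha_pos, ha_lt]
  exact ⟨blowUp (t.core K) f, ⟨isSymm_blowUp (isSymm_core t) f,
    blowUp_apply_eq_zero_or_one (core_apply_eq_zero_or_one t) f,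
    rank_blowUp (isUnit_core t) hf_surj⟩, f, hf, rfl⟩

end OrbitParams

theorem card_quot_eq_of_classifying {α β : Type*} {r : α → α → Prop} {S : Finset β}
    {R : α → β → Prop} (hα : ∀ a, ∃ b ∈ S, R a b) (hβ : ∀ b ∈ S, ∃ a, R a b)
    (hr : ∀ {a a' b b'}, b ∈ S → b' ∈ S → R a b → R a' b' → (r a a' ↔ b = b')) :
    Nat.card (Quot r) = S.card := by
  choose F hFS hF using hα
  have hrF {a a' : α} : r a a' ↔ F a = F a' := hr (hFS a) (hFS a') (hF a) (hF a')
  rw [← Nat.card_eq_finsetCard]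
  refine Nat.card_eq_of_bijective
    (Quot.lift (fun a => (⟨F a, hFS a⟩ : S)) fun a a' h => Subtype.ext (hrF.1 h)) ⟨?_, ?_⟩
  · rintro ⟨a⟩ ⟨a'⟩ h
    exact Quot.sound (hrF.2 (congrArg Subtype.val h))
  · rintro ⟨b, hb⟩
    obtain ⟨a, ha⟩ := hβ b hb
    exact ⟨Quot.mk r a, Subtype.ext ((hr (hFS a) hb (hF a) ha).1 (hrF.2 rfl))⟩

theorem orbit_count_symmetric_zero_one_rank_two_matrices_general (ι K : Type*) [Fintype ι]
    [Field K] [NeZero (2 : K)] :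
    Nat.card (Quot (fun (A B : {A : Matrix ι ι K //
        A.IsSymm ∧ (∀ i j, A i j = 0 ∨ A i j = 1) ∧ A.rank = 2}) =>
      ∃ π : Equiv.Perm ι, (fun i j => A.1 (π⁻¹ i) (π⁻¹ j)) = B.1))
    = 2 * (Fintype.card ι / 2) * ((Fintype.card ι + 1) / 2)
      + Fintype.card ι * (Fintype.card ι - 1) / 2 := by
  rw [← card_orbitParams]
  refine card_quot_eq_of_classifying (R := fun A p => HasParams A.1 p) ?_ ?_ ?_
  · exact fun ⟨A, hA, h01, hr⟩ => exists_hasParams_of_rank_eq_two hA h01 hr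
  · intro p hp
    obtain ⟨A, hA, hAp⟩ := exists_rank_eq_two_hasParams K hp
    exact ⟨⟨A, hA⟩, hAp⟩
  · exact fun hp hq hA hB => HasParams.permSimilar_iff hp hq hA hB

/-- The number of orbits of `Sym([n])`, acting by simultaneous row and column
permutations, on symmetric `n × n` matrices over `ℚ` with entries in `{0,1}` and rank
exactly `2`, equals `2·⌊n/2⌋·⌈n/2⌉ + n(n-1)/2`. -/
theorem orbit_count_symmetric_zero_one_rank_two_matrices (n : ℕ) :
    Nat.card (Quot (fun (A B : {A : Matrix (Fin n) (Fin n) ℚ //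
        A.IsSymm ∧ (∀ i j, A i j = 0 ∨ A i j = 1) ∧ A.rank = 2}) =>
      ∃ π : Equiv.Perm (Fin n), (fun i j => A.1 (π⁻¹ i) (π⁻¹ j)) = B.1))
    = 2 * (n / 2) * ((n + 1) / 2) + n * (n - 1) / 2 := by
  simpa using orbit_count_symmetric_zero_one_rank_two_matrices_general (Fin n) ℚ
end
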